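/- arXiv:2602.05357 — 2 statements merged into one kernel-verified Lean document; each statement's English description precedes it below -/
import Mathlib

section
/- Let θ : ℝⁿ → (−∞,+∞] be a symmetric, proper, polyhedral convex function (its epigraph is a polyhedral convex set), let g = θ∘λ be the associated spectral function, and let X ∈ Sⁿ with θ(λ(X)) finite. If Y belongs to the relative interior of the convex subdifferential ∂g(X), then g is generalized twice differentiable at X for Y. -/
open Filter Topology Matrix

noncomputable section

namespace SpecPaper

/-! ## Generic variational analysis definitions over a topological real vector space -/

variable {E : Type*}

section Generic

variable [AddCommGroup E] [Module ℝ E] [TopologicalSpace E]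

/-- `f x` is finite (neither `+∞` nor `-∞`). -/
def IsFiniteAt (f : E → EReal) (x : E) : Prop :=
  f x ≠ ⊤ ∧ f x ≠ ⊥

/-- The norm induced by a given inner product. -/
noncomputable def nrm (ip : E → E → ℝ) (x : E) : ℝ :=
  Real.sqrt (ip x x)

/-- The subderivative `df(x)(w)`. -/
noncomputable def subderiv (f : E → EReal) (x w : E) : EReal :=
  Filter.liminf (fun p : ℝ × E => (((p.1)⁻¹ : ℝ) : EReal) * (f (x + p.1 • p.2) - f x))
    ((nhdsWithin (0 : ℝ) (Set.Ioi 0)) ×ˢ nhds w)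

/-- The second-order difference quotient `Δ²ₜ f(x,v)(w)`. -/
noncomputable def sdq2 (ip : E → E → ℝ) (f : E → EReal) (x v : E) (t : ℝ) (w : E) : EReal :=
  (((2 / t ^ 2) : ℝ) : EReal) * (f (x + t • w) - f x - ((t * ip v w : ℝ) : EReal))

/-- The second subderivative `d²f(x,v)(w)`. -/
noncomputable def subderiv2 (ip : E → E → ℝ) (f : E → EReal) (x v w : E) : EReal :=
  Filter.liminf (fun p : ℝ × E => sdq2 ip f x v p.1 p.2)
    ((nhdsWithin (0 : ℝ) (Set.Ioi 0)) ×ˢ nhds w)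

/-- Twice epi-differentiability of `f` at `x` for `v`. -/
def TwiceEpiDiff (ip : E → E → ℝ) (f : E → EReal) (x v : E) : Prop :=
  IsFiniteAt f x ∧
    ∀ t : ℕ → ℝ, (∀ k, 0 < t k) → Tendsto t atTop (nhds 0) →
      ∀ w : E, ∃ ws : ℕ → E, Tendsto ws atTop (nhds w) ∧
        Tendsto (fun k => sdq2 ip f x v (t k) (ws k)) atTop (nhds (subderiv2 ip f x v w))

/-- `v` is a regular subgradient of `f` at `x`. -/
def RegSubgrad (ip : E → E → ℝ) (f : E → EReal) (x v : E) : Prop :=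
  IsFiniteAt f x ∧
    (0 : EReal) ≤ Filter.liminf
      (fun y : E =>
        (((nrm ip (y - x))⁻¹ : ℝ) : EReal) * (f y - f x - ((ip v (y - x) : ℝ) : EReal)))
      (nhdsWithin x {x}ᶜ)

/-- `v` is a (limiting) subgradient of `f` at `x`. -/
def LimSubgrad (ip : E → E → ℝ) (f : E → EReal) (x v : E) : Prop :=
  ∃ xs vs : ℕ → E, (∀ k, RegSubgrad ip f (xs k) (vs k)) ∧
    Tendsto xs atTop (nhds x) ∧ Tendsto vs atTop (nhds v) ∧
    Tendsto (fun k => f (xs k)) atTop (nhds (f x))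

/-- The tangent cone to `C` at `x`. -/
def tangentCone (C : Set E) (x : E) : Set E :=
  {w | ∃ (t : ℕ → ℝ) (ws : ℕ → E), (∀ k, 0 < t k) ∧ Tendsto t atTop (nhds 0) ∧
    Tendsto ws atTop (nhds w) ∧ ∀ k, x + t k • ws k ∈ C}

/-- The regular normal cone to `C` at `x`. -/
def regNormalCone (ip : E → E → ℝ) (C : Set E) (x : E) : Set E :=
  {v | ∀ w ∈ tangentCone C x, ip v w ≤ 0}

/-- The limiting normal cone to `C` at `x`. -/
def limNormalCone (ip : E → E → ℝ) (C : Set E) (x : E) : Set E :=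
  {v | ∃ xs vs : ℕ → E, (∀ k, xs k ∈ C) ∧ (∀ k, vs k ∈ regNormalCone ip C (xs k)) ∧
    Tendsto xs atTop (nhds x) ∧ Tendsto vs atTop (nhds v)}

/-- The critical cone `C_f(x,v)`. -/
def criticalCone (ip : E → E → ℝ) (f : E → EReal) (x v : E) : Set E :=
  {w | subderiv f x w = ((ip v w : ℝ) : EReal)}

/-- `f` is locally Lipschitz continuous at `x` relative to its domain. -/
def LocLipAtRelDom (ip : E → E → ℝ) (f : E → EReal) (x : E) : Prop :=
  IsFiniteAt f x ∧
    ∃ V ∈ nhds x, ∃ ℓ : ℝ, 0 ≤ ℓ ∧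
      ∀ a ∈ V, ∀ b ∈ V, f a ≠ ⊤ → f b ≠ ⊤ →
        f a ≠ ⊥ ∧ f b ≠ ⊥ ∧ |(f a).toReal - (f b).toReal| ≤ ℓ * nrm ip (a - b)

/-- `f` is locally Lipschitz continuous relative to its domain. -/
def LocLipRelDom (ip : E → E → ℝ) (f : E → EReal) : Prop :=
  ∀ x : E, f x ≠ ⊤ → LocLipAtRelDom ip f x

/-- `v` is a proximal subgradient of `f` at `x`. -/
def ProxSubgrad (ip : E → E → ℝ) (f : E → EReal) (x v : E) : Prop :=
  IsFiniteAt f x ∧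
    ∃ r > (0 : ℝ), ∃ ε > (0 : ℝ), ∀ x' : E, nrm ip (x' - x) ≤ ε →
      f x + ((ip v (x' - x) - r / 2 * ip (x' - x) (x' - x) : ℝ) : EReal) ≤ f x'

/-- `f` is prox-regular at `x` for `v`. -/
def ProxRegularAtFor (ip : E → E → ℝ) (f : E → EReal) (x v : E) : Prop :=
  IsFiniteAt f x ∧
    (∃ δ > (0 : ℝ), LowerSemicontinuousOn f {x' | nrm ip (x' - x) < δ}) ∧
    ∃ ε > (0 : ℝ), ∃ r : ℝ, 0 ≤ r ∧
      ∀ x₁ v₁ : E, LimSubgrad ip f x₁ v₁ → nrm ip (x₁ - x) < ε → nrm ip (v₁ - v) < ε →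
        f x₁ < f x + (ε : EReal) →
        ∀ x' : E, nrm ip (x' - x) < ε →
          f x₁ + ((ip v₁ (x' - x₁) - r / 2 * ip (x' - x₁) (x' - x₁) : ℝ) : EReal) ≤ f x'

/-- `f` is prox-regular at `x` (for every subgradient). -/
def ProxRegularAt (ip : E → E → ℝ) (f : E → EReal) (x : E) : Prop :=
  ∀ v : E, LimSubgrad ip f x v → ProxRegularAtFor ip f x v

/-- `f` is subdifferentially continuous at `x`. -/
def SubdiffContAt (ip : E → E → ℝ) (f : E → EReal) (x : E) : Prop :=
  ∀ v : E, LimSubgrad ip f x v →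
    ∀ xs vs : ℕ → E, (∀ k, LimSubgrad ip f (xs k) (vs k)) →
      Tendsto xs atTop (nhds x) → Tendsto vs atTop (nhds v) →
      Tendsto (fun k => f (xs k)) atTop (nhds (f x))

/-- `f` is prox-bounded. -/
def ProxBounded (ip : E → E → ℝ) (f : E → EReal) : Prop :=
  ∃ α c : ℝ, ∀ x : E, (c : EReal) ≤ f x + ((α * ip x x : ℝ) : EReal)

/-- The proximal mapping (as a set of minimizers). -/
def proxSet (ip : E → E → ℝ) (f : E → EReal) (γ : ℝ) (x : E) : Set E :=
  {w | ∀ w' : E,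
    f w + ((1 / (2 * γ) * ip (w - x) (w - x) : ℝ) : EReal) ≤
      f w' + ((1 / (2 * γ) * ip (w' - x) (w' - x) : ℝ) : EReal)}

/-- The proximal map of `f` with parameter `γ` is single-valued around `z` and the resulting
map is directionally differentiable at `z`. -/
def ProxSingleDirDiff (ip : E → E → ℝ) (f : E → EReal) (γ : ℝ) (z : E) : Prop :=
  ∃ V ∈ nhds z, ∃ P : E → E, (∀ u ∈ V, proxSet ip f γ u = {P u}) ∧
    ∀ h : E, ∃ L : E,
      Tendsto (fun t : ℝ => t⁻¹ • (P (z + t • h) - P z)) (nhdsWithin 0 (Set.Ioi 0)) (nhds L)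

/-- The parabolic difference quotient. -/
noncomputable def parabQuot (f : E → EReal) (x w : E) (t : ℝ) (z : E) : EReal :=
  (((2 / t ^ 2) : ℝ) : EReal) *
    (f (x + t • w + (t ^ 2 / 2) • z) - f x - ((t * (subderiv f x w).toReal : ℝ) : EReal))

/-- The parabolic subderivative `d²f(x)(w | z)`. -/
noncomputable def parabSubderiv (f : E → EReal) (x w z : E) : EReal :=
  Filter.liminf (fun p : ℝ × E => parabQuot f x w p.1 p.2)
    ((nhdsWithin (0 : ℝ) (Set.Ioi 0)) ×ˢ nhds z)

/-- `f` is parabolically epi-differentiable at `x` for `w`. -/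
def ParabEpiDiff (f : E → EReal) (x w : E) : Prop :=
  (∃ z : E, parabSubderiv f x w z < ⊤) ∧
    ∀ t : ℕ → ℝ, (∀ k, 0 < t k) → Tendsto t atTop (nhds 0) →
      ∀ z : E, ∃ zs : ℕ → E, Tendsto zs atTop (nhds z) ∧
        Tendsto (fun k => parabQuot f x w (t k) (zs k)) atTop (nhds (parabSubderiv f x w z))

/-- `φ` is a generalized quadratic form: its domain is a linear subspace and on the domain it is
given by a symmetric linear operator. -/
def IsGQF (ip : E → E → ℝ) (φ : E → EReal) : Prop :=
  (φ 0 ≠ ⊤) ∧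
  (∀ x y : E, φ x ≠ ⊤ → φ y ≠ ⊤ → φ (x + y) ≠ ⊤) ∧
  (∀ (c : ℝ) (x : E), φ x ≠ ⊤ → φ (c • x) ≠ ⊤) ∧
  ∃ L : E → E,
    (∀ x y : E, φ x ≠ ⊤ → φ y ≠ ⊤ → L (x + y) = L x + L y) ∧
    (∀ (c : ℝ) (x : E), φ x ≠ ⊤ → L (c • x) = c • L x) ∧
    (∀ x y : E, φ x ≠ ⊤ → φ y ≠ ⊤ → ip (L x) y = ip x (L y)) ∧
    (∀ x : E, φ x ≠ ⊤ → φ x = ((ip (L x) x : ℝ) : EReal))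

/-- `f` is generalized twice differentiable at `x` for `v`. -/
def GenTwiceDiff (ip : E → E → ℝ) (f : E → EReal) (x v : E) : Prop :=
  TwiceEpiDiff ip f x v ∧ IsGQF ip (subderiv2 ip f x v)

/-- Proto-differentiability of a set-valued map `F` at `x` for `y ∈ F x`. -/
def ProtoDiff (F : E → Set E) (x y : E) : Prop :=
  ∀ w η : E, (w, η) ∈ tangentCone {p : E × E | p.2 ∈ F p.1} (x, y) →
    ∀ t : ℕ → ℝ, (∀ k, 0 < t k) → Tendsto t atTop (nhds 0) →
      ∃ ws ηs : ℕ → E, Tendsto ws atTop (nhds w) ∧ Tendsto ηs atTop (nhds η) ∧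
        ∀ k, y + t k • ηs k ∈ F (x + t k • ws k)

/-- Relative interior of a set (interior relative to its affine hull). -/
def relInterior (C : Set E) : Set E :=
  {y | y ∈ C ∧ ∃ V ∈ nhds y, ∀ z ∈ V, z ∈ affineSpan ℝ C → z ∈ C}

/-- A polyhedral set: the intersection of finitely many closed half-spaces. -/
def IsPolyhedral (ip : E → E → ℝ) (C : Set E) : Prop :=
  ∃ (k : ℕ) (a : Fin k → E) (b : Fin k → ℝ), C = {x | ∀ j : Fin k, ip (a j) x ≤ b j}

/-- The subdifferential of a convex function. -/
def convexSubdiff (ip : E → E → ℝ) (f : E → EReal) (x : E) : Set E :=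
  {v | ∀ z : E, f x + ((ip v (z - x) : ℝ) : EReal) ≤ f z}

/-- The natural inner product on `E × ℝ`. -/
def ipProd (ip : E → E → ℝ) : E × ℝ → E × ℝ → ℝ :=
  fun p q => ip p.1 q.1 + p.2 * q.2

/-- The epigraph of `f`. -/
def epiSet (f : E → EReal) : Set (E × ℝ) :=
  {p | f p.1 ≤ (p.2 : EReal)}

/-- `f` is subdifferentially regular at `x`. -/
def SubdiffRegularAt (ip : E → E → ℝ) (f : E → EReal) (x : E) : Prop :=
  IsFiniteAt f x ∧
    regNormalCone (ipProd ip) (epiSet f) (x, (f x).toReal) =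
      limNormalCone (ipProd ip) (epiSet f) (x, (f x).toReal)

/-! Real-valued versions: semidifferentiability, gradients. -/

/-- `f` is semidifferentiable at `x`. -/
def SemiDiffAt (f : E → ℝ) (x : E) : Prop :=
  ∀ w : E, ∃ d : ℝ,
    Tendsto (fun p : ℝ × E => (p.1)⁻¹ * (f (x + p.1 • p.2) - f x))
      ((nhdsWithin (0 : ℝ) (Set.Ioi 0)) ×ˢ nhds w) (nhds d)

/-- The (real value of the) subderivative of a real-valued function. -/
noncomputable def dReal (f : E → ℝ) (x w : E) : ℝ :=
  (subderiv (fun y => ((f y : ℝ) : EReal)) x w).toReal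

/-- The second-order difference quotient built from the subderivative. -/
noncomputable def sdq2R (f : E → ℝ) (x : E) (t : ℝ) (w : E) : ℝ :=
  (2 / t ^ 2) * (f (x + t • w) - f x - t * dReal f x w)

/-- `f` is twice semidifferentiable at `x`. -/
def TwiceSemiDiffAt (f : E → ℝ) (x : E) : Prop :=
  SemiDiffAt f x ∧
    ∀ w : E, ∃ d : ℝ,
      Tendsto (fun p : ℝ × E => sdq2R f x p.1 p.2)
        ((nhdsWithin (0 : ℝ) (Set.Ioi 0)) ×ˢ nhds w) (nhds d)

/-- The second semiderivative `d²f(x)(w)` (the liminf; it is the full limit whenever `f` is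
twice semidifferentiable at `x`). -/
noncomputable def secondSemiDeriv (f : E → ℝ) (x w : E) : EReal :=
  Filter.liminf (fun p : ℝ × E => ((sdq2R f x p.1 p.2 : ℝ) : EReal))
    ((nhdsWithin (0 : ℝ) (Set.Ioi 0)) ×ˢ nhds w)

/-- `f` is (Fréchet) differentiable at `x` with gradient `g` (w.r.t. inner product `ip`). -/
def HasGradAt (ip : E → E → ℝ) (f : E → ℝ) (x g : E) : Prop :=
  Tendsto (fun y : E => (nrm ip (y - x))⁻¹ * (f y - f x - ip g (y - x)))
    (nhdsWithin x {x}ᶜ) (nhds 0)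

/-- `f` is locally Lipschitz continuous around `x`. -/
def LocLipAt (ip : E → E → ℝ) (f : E → ℝ) (x : E) : Prop :=
  ∃ V ∈ nhds x, ∃ ℓ : ℝ, 0 ≤ ℓ ∧ ∀ a ∈ V, ∀ b ∈ V, |f a - f b| ≤ ℓ * nrm ip (a - b)

/-- `f` is twice differentiable at `x` with gradient map `G` near `x` and second derivative
(the derivative of `G` at `x`) given by the linear map `Dxx`. -/
def HasSecondDerivAt (ip : E → E → ℝ) (f : E → EReal) (x : E) (G : E → E) (Dxx : E → E) :
    Prop :=
  ∃ V ∈ nhds x, ∃ fr : E → ℝ,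
    (∀ z ∈ V, f z = ((fr z : ℝ) : EReal)) ∧
    (∀ z ∈ V, HasGradAt ip fr z (G z)) ∧
    IsLinearMap ℝ Dxx ∧
    Tendsto (fun z : E => (nrm ip (z - x))⁻¹ • (G z - G x - Dxx (z - x)))
      (nhdsWithin x {x}ᶜ) (nhds 0)

/-- `f` is twice differentiable at `x`. -/
def TwiceDiffAt (ip : E → E → ℝ) (f : E → EReal) (x : E) : Prop :=
  ∃ G Dxx : E → E, HasSecondDerivAt ip f x G Dxx

end Generic

/-! ## Eigenvalues and spectral machinery -/

open scoped Classical in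
/-- The eigenvalues of a real symmetric matrix, arranged in nonincreasing order
(junk value `0` if the matrix is not symmetric). -/
noncomputable def eigval {n : ℕ} (X : Matrix (Fin n) (Fin n) ℝ) : Fin n → ℝ :=
  if h : X.IsHermitian then
    fun i => h.eigenvalues (Tuple.sort (fun j => -h.eigenvalues j) i)
  else 0

/-- `Oⁿ(X)`: orthogonal matrices realizing the ordered spectral decomposition of `X`. -/
def eigOrth {n : ℕ} (X : Matrix (Fin n) (Fin n) ℝ) : Set (Matrix (Fin n) (Fin n) ℝ) :=
  {U | U * Uᵀ = 1 ∧ X = U * Matrix.diagonal (eigval X) * Uᵀ}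

open scoped Classical in
/-- The block `α_m` of indices `j` whose eigenvalue `λ_j(X)` equals `λ_i(X)`. -/
noncomputable def blockSet {n : ℕ} (X : Matrix (Fin n) (Fin n) ℝ) (i : Fin n) :
    Finset (Fin n) :=
  Finset.univ.filter fun j => eigval X j = eigval X i

lemma mem_blockSet_self {n : ℕ} (X : Matrix (Fin n) (Fin n) ℝ) (i : Fin n) :
    i ∈ blockSet X i := by
  simp [blockSet]

/-- The increasing enumeration of the block of `i`. -/
noncomputable def blockEmb {n : ℕ} (X : Matrix (Fin n) (Fin n) ℝ) (i : Fin n) :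
    Fin (blockSet X i).card → Fin n :=
  fun a => ((blockSet X i).orderIsoOfFin rfl a : Fin n)

/-- The position of `i` inside its own block. -/
noncomputable def blockIdx {n : ℕ} (X : Matrix (Fin n) (Fin n) ℝ) (i : Fin n) :
    Fin (blockSet X i).card :=
  ((blockSet X i).orderIsoOfFin rfl).symm ⟨i, mem_blockSet_self X i⟩

/-- The principal submatrix of `M` corresponding to the block of `i` (for `X`). -/
noncomputable def blockMat {n : ℕ} (X M : Matrix (Fin n) (Fin n) ℝ) (i : Fin n) :
    Matrix (Fin (blockSet X i).card) (Fin (blockSet X i).card) ℝ :=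
  Matrix.of fun a b => M (blockEmb X i a) (blockEmb X i b)

/-- The directional derivative `λ'(X;H)` of the ordered eigenvalue map, computed through
`U ∈ Oⁿ(X)`: blockwise ordered eigenvalues of `U_{α_m}ᵀ H U_{α_m}`. -/
noncomputable def lambdaDir {n : ℕ} (X U H : Matrix (Fin n) (Fin n) ℝ) : Fin n → ℝ :=
  fun i => eigval (blockMat X (Uᵀ * H * U) i) (blockIdx X i)

open scoped Classical in
/-- The Moore–Penrose pseudoinverse of a square real matrix, characterized by the four
Penrose equations. -/
noncomputable def pinv {n : ℕ} (A : Matrix (Fin n) (Fin n) ℝ) :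
    Matrix (Fin n) (Fin n) ℝ :=
  if h : ∃ B : Matrix (Fin n) (Fin n) ℝ,
      A * B * A = A ∧ B * A * B = B ∧ (A * B)ᵀ = A * B ∧ (B * A)ᵀ = B * A
  then h.choose else 0

/-- The curvature term `2 ∑ₘ ⟨Diag(y)_{αₘαₘ}, U_{αₘ}ᵀ H (μₘ I - X)† H U_{αₘ}⟩`, written as a
single sum over all indices. -/
noncomputable def curvTerm {n : ℕ} (X U H : Matrix (Fin n) (Fin n) ℝ) (y : Fin n → ℝ) : ℝ :=
  2 * ∑ i : Fin n, y i *
    (Uᵀ * (H * pinv (eigval X i • (1 : Matrix (Fin n) (Fin n) ℝ) - X) * H) * U) i i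

/-- Two symmetric matrices admit a simultaneous ordered spectral decomposition. -/
def simOrdSpec {k : ℕ} (A B : Matrix (Fin k) (Fin k) ℝ) : Prop :=
  ∃ P : Matrix (Fin k) (Fin k) ℝ, P * Pᵀ = 1 ∧
    A = P * Matrix.diagonal (eigval A) * Pᵀ ∧
    B = P * Matrix.diagonal (eigval B) * Pᵀ

/-- The subspace of symmetric `n × n` real matrices. -/
def symSubmodule (n : ℕ) : Submodule ℝ (Matrix (Fin n) (Fin n) ℝ) where
  carrier := {A | A.IsSymm}
  add_mem' := by
    intro a b ha hb
    simp only [Set.mem_setOf_eq, Matrix.IsSymm] at *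
    rw [Matrix.transpose_add, ha, hb]
  zero_mem' := by
    simp only [Set.mem_setOf_eq, Matrix.IsSymm, Matrix.transpose_zero]
  smul_mem' := by
    intro c a ha
    simp only [Set.mem_setOf_eq, Matrix.IsSymm] at *
    rw [Matrix.transpose_smul, ha]

/-- The space `Sⁿ` of symmetric `n × n` real matrices. -/
abbrev Sym (n : ℕ) : Type := ↥(symSubmodule n)

/-- The trace inner product `⟨A, B⟩ = tr(AB)` on `Sⁿ`. -/
noncomputable def ipM {n : ℕ} (A B : Sym n) : ℝ :=
  ((A : Matrix (Fin n) (Fin n) ℝ) * (B : Matrix (Fin n) (Fin n) ℝ)).trace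

/-- The Euclidean inner product on `ℝⁿ`. -/
def ipV {n : ℕ} (v w : Fin n → ℝ) : ℝ :=
  ∑ i, v i * w i

/-- The spectral function `g = θ ∘ λ` on `Sⁿ`. -/
noncomputable def specFn {n : ℕ} (θ : (Fin n → ℝ) → EReal) : Sym n → EReal :=
  fun A => θ (eigval (A : Matrix (Fin n) (Fin n) ℝ))

/-- A function on `ℝⁿ` is symmetric (permutation invariant). -/
def SymmetricFn {n : ℕ} {α : Type*} (θ : (Fin n → ℝ) → α) : Prop :=
  ∀ (x : Fin n → ℝ) (σ : Equiv.Perm (Fin n)), θ (fun i => x (σ i)) = θ x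

/-- The diagonal matrix `Diag(w)` as an element of `Sⁿ`. -/
noncomputable def diagSym {n : ℕ} (w : Fin n → ℝ) : Sym n :=
  ⟨Matrix.diagonal w, Matrix.isSymm_diagonal w⟩

/-- The `i`-th order statistic: `orderStat x i` is the `i`-th largest entry of `x`. -/
noncomputable def orderStat {n : ℕ} (x : Fin n → ℝ) : Fin n → ℝ :=
  fun i => x (Tuple.sort (fun j => -x j) i)

/-!
Write `f = θ ∘ λ`. It is invariant under conjugation by orthogonal matrices, so by Fermat's rule
along the orbit of `X` every subgradient `Y` commutes with `X`. Each symmetric `W` splits as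
`W = B + ⁅S, X⁆` with `B` commuting with `X` and `S` skew-symmetric.

*Lower bound.* The subgradient inequality at `e^{tS'} (X + t W') e^{-tS'}`, where `f` takes the same
value as at `X + t W'`, bounds the second subderivative at `W` from below by
`tr (Y ⁅S', ⁅S', X⁆⁆) + 2 tr (Y ⁅S', W⁆)` for every skew `S'`; the best choice is `S' = -S`.

*Upper bound.* If all subgradients agree on `W`, then they agree on `B`, and polyhedrality of `θ`
makes `f` affine along `X + t B` for small `t ≥ 0`: subgradients of `θ` lift to subgradients of `f`
because the diagonal of a symmetric matrix is a doubly stochastic average of its eigenvalues.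
Hence the curve `e^{tS} (X + t B) e^{-tS}`, whose velocity at `0` is `W`, attains the lower bound,
and the value is the quadratic form `tr (⁅S, Y⁆ W)`.

*Off the critical subspace.* If the subgradients do not agree on `W`, relative interiority of `Y`
yields a subgradient `Y'` with `⟨Y', W⟩ > ⟨Y, W⟩`, and the difference quotients blow up.
-/

section SecondSubderivative

variable [AddCommGroup E] [Module ℝ E] {ip : E → E → ℝ} {f : E → EReal} {x v w : E}

lemma sdq2_eq_coe {t c q : ℝ} (ht : 0 < t) (hc : f x = (c : EReal))
    (h : f (x + t • w) = ((c + t * ip v w + t ^ 2 / 2 * q : ℝ) : EReal)) :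
    sdq2 ip f x v t w = (q : EReal) := by
  rw [sdq2, hc, h, ← EReal.coe_sub, ← EReal.coe_sub, ← EReal.coe_mul]
  congr 1
  field_simp
  ring

lemma coe_le_sdq2 {t c q : ℝ} (ht : 0 < t) (hc : f x = (c : EReal))
    (h : ((c + t * ip v w + t ^ 2 / 2 * q : ℝ) : EReal) ≤ f (x + t • w)) :
    (q : EReal) ≤ sdq2 ip f x v t w := by
  have hq : q = 2 / t ^ 2 * (c + t * ip v w + t ^ 2 / 2 * q - c - t * ip v w) := by
    field_simp
    ring
  have hscale : (0 : EReal) ≤ ((2 / t ^ 2 : ℝ) : EReal) := by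
    exact_mod_cast (by positivity : 0 ≤ 2 / t ^ 2)
  rw [hq, sdq2, hc, EReal.coe_mul, EReal.coe_sub, EReal.coe_sub]
  exact mul_le_mul_of_nonneg_left (EReal.sub_le_sub (EReal.sub_le_sub h le_rfl) le_rfl) hscale

/-- The directions on which every element of `C` agrees with `v`. When `C` is the subdifferential
of a convex function and `v` lies in its relative interior, this is the critical cone at `v`. -/
def criticalSubspace (B : LinearMap.BilinForm ℝ E) (C : Set E) (v : E) : Submodule ℝ E :=
  ⨅ y ∈ C, LinearMap.ker (B y - B v)

lemma mem_criticalSubspace {B : LinearMap.BilinForm ℝ E} {C : Set E} :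
    w ∈ criticalSubspace B C v ↔ ∀ y ∈ C, B y w = B v w := by
  simp [criticalSubspace, sub_eq_zero]

variable [TopologicalSpace E]

lemma coe_le_subderiv2_of_tendsto {c q : ℝ} {K : ℝ × E → ℝ} (hc : f x = (c : EReal))
    (hK : Tendsto K (𝓝[>] 0 ×ˢ 𝓝 w) (𝓝 q))
    (hle : ∀ t > 0, ∀ w',
      ((c + t * ip v w' + t ^ 2 / 2 * K (t, w') : ℝ) : EReal) ≤ f (x + t • w')) :
    (q : EReal) ≤ subderiv2 ip f x v w := by
  have hpos : ∀ᶠ p : ℝ × E in 𝓝[>] 0 ×ˢ 𝓝 w, 0 < p.1 :=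
    tendsto_fst.eventually self_mem_nhdsWithin
  rw [← ((continuous_coe_real_ereal.tendsto q).comp hK).liminf_eq]
  refine liminf_le_liminf ?_
  filter_upwards [hpos] with p hp using coe_le_sdq2 hp hc (hle p.1 hp p.2)

/-- A curve `t ↦ ws t` of directions tending to `w` as `t ↓ 0` along which the second-order
difference quotients of `f` at `x` for `v` tend to `q`: the continuous-parameter version of the
recovery sequences in the definition of twice epi-differentiability. -/
def HasRecoveryCurve (ip : E → E → ℝ) (f : E → EReal) (x v w : E) (q : EReal) : Prop :=
  ∃ ws : ℝ → E, Tendsto ws (𝓝[>] 0) (𝓝 w) ∧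
    Tendsto (fun t => sdq2 ip f x v t (ws t)) (𝓝[>] 0) (𝓝 q)

lemma HasRecoveryCurve.subderiv2_le {q : EReal} (h : HasRecoveryCurve ip f x v w q) :
    subderiv2 ip f x v w ≤ q := by
  obtain ⟨ws, hws, hq⟩ := h
  have hcurve : Tendsto (fun t => (t, ws t)) (𝓝[>] 0) (𝓝[>] 0 ×ˢ 𝓝 w) :=
    tendsto_id.prodMk hws
  calc subderiv2 ip f x v w
      ≤ liminf (fun p : ℝ × E => sdq2 ip f x v p.1 p.2) (map (fun t => (t, ws t)) (𝓝[>] 0)) :=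
        liminf_le_liminf_of_le hcurve
    _ = q := (tendsto_map'_iff.mpr hq).liminf_eq

lemma hasRecoveryCurve_top (h : subderiv2 ip f x v w = ⊤) :
    HasRecoveryCurve ip f x v w ⊤ := by
  have hlim : Tendsto (fun p : ℝ × E => sdq2 ip f x v p.1 p.2) (𝓝[>] 0 ×ˢ 𝓝 w) (𝓝 ⊤) :=
    tendsto_of_le_liminf_of_limsup_le h.ge le_top
  have hconst : Tendsto (fun t : ℝ => (t, w)) (𝓝[>] 0) (𝓝[>] 0 ×ˢ 𝓝 w) :=
    tendsto_id.prodMk tendsto_const_nhds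
  exact ⟨fun _ => w, tendsto_const_nhds, by simpa only [Function.comp_def] using hlim.comp hconst⟩

lemma twiceEpiDiff_of_hasRecoveryCurve (hfin : IsFiniteAt f x)
    (h : ∀ w, HasRecoveryCurve ip f x v w (subderiv2 ip f x v w)) :
    TwiceEpiDiff ip f x v := by
  refine ⟨hfin, fun t htpos ht w => ?_⟩
  have ht' : Tendsto t atTop (𝓝[>] 0) :=
    tendsto_nhdsWithin_iff.mpr ⟨ht, Eventually.of_forall htpos⟩
  obtain ⟨ws, hws, hq⟩ := h w
  exact ⟨ws ∘ t, hws.comp ht', hq.comp ht'⟩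

lemma genTwiceDiff_of_hasRecoveryCurve {B : LinearMap.BilinForm ℝ E} (hfin : IsFiniteAt f x)
    (K : Submodule ℝ E) (L : E →ₗ[ℝ] E) (hL : ∀ u w, B (L u) w = B u (L w))
    (hlower : ∀ w ∈ K, ((B (L w) w : ℝ) : EReal) ≤ subderiv2 (fun v w => B v w) f x v w)
    (hupper : ∀ w ∈ K, HasRecoveryCurve (fun v w => B v w) f x v w (B (L w) w : ℝ))
    (htop : ∀ w ∉ K, subderiv2 (fun v w => B v w) f x v w = ⊤) :
    GenTwiceDiff (fun v w => B v w) f x v := by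
  have hval w (hw : w ∈ K) : subderiv2 (fun v w => B v w) f x v w = (B (L w) w : ℝ) :=
    le_antisymm (hupper w hw).subderiv2_le (hlower w hw)
  have hdom w : subderiv2 (fun v w => B v w) f x v w ≠ ⊤ ↔ w ∈ K :=
    ⟨fun h => by_contra fun hw => h (htop w hw), fun hw => hval w hw ▸ EReal.coe_ne_top _⟩
  refine ⟨twiceEpiDiff_of_hasRecoveryCurve hfin fun w => ?_, ?_⟩
  · by_cases hw : w ∈ K
    · exact hval w hw ▸ hupper w hw
    · exact htop w hw ▸ hasRecoveryCurve_top (htop w hw)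
  · simp only [IsGQF, hdom]
    exact ⟨K.zero_mem, fun _ _ => K.add_mem, fun c _ => K.smul_mem c, L,
      fun u w _ _ => map_add L u w, fun c w _ => map_smul L c w, fun u w _ _ => hL u w, hval⟩

-- If `y` pairs with `w` less than `v` does, overshoot from `y` past `v` inside `C`.
lemma exists_lt_of_mem_relInterior [IsTopologicalAddGroup E] [ContinuousSMul ℝ E]
    {B : LinearMap.BilinForm ℝ E} {C : Set E} (hv : v ∈ relInterior C)
    (hw : w ∉ criticalSubspace B C v) : ∃ y ∈ C, B v w < B y w := by
  obtain ⟨hvC, V, hV, hVC⟩ := hv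
  simp only [mem_criticalSubspace, not_forall] at hw
  obtain ⟨y, hy, hne⟩ := hw
  rcases lt_or_gt_of_ne hne with hlt | hgt
  · have hline : Tendsto (fun ε : ℝ => AffineMap.lineMap v y (-ε)) (𝓝[>] 0) (𝓝 v) := by
      have hcont : Continuous fun ε : ℝ => AffineMap.lineMap v y (-ε) := by
        simp only [AffineMap.lineMap_apply_module']
        fun_prop
      simpa using (hcont.tendsto 0).mono_left nhdsWithin_le_nhds
    obtain ⟨ε, hεV, hε⟩ := ((hline.eventually hV).and self_mem_nhdsWithin).exists
    refine ⟨_, hVC _ hεV (AffineMap.lineMap_mem _ (subset_affineSpan ℝ _ hvC)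
      (subset_affineSpan ℝ _ hy)), ?_⟩
    have hgain : 0 < ε * (B v w - B y w) := mul_pos hε (sub_pos.mpr hlt)
    simp only [AffineMap.lineMap_apply_module', map_add, map_smul, map_sub, LinearMap.add_apply,
      LinearMap.smul_apply, LinearMap.sub_apply, smul_eq_mul]
    linarith
  · exact ⟨y, hy, hgt⟩

lemma subderiv2_eq_top_of_lt {B : LinearMap.BilinForm ℝ E} (hB : ∀ v, Continuous (B v)) {y : E}
    (hfin : IsFiniteAt f x) (hy : y ∈ convexSubdiff (fun v w => B v w) f x)
    (hlt : B v w < B y w) : subderiv2 (fun v w => B v w) f x v w = ⊤ := by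
  obtain ⟨c, hc⟩ : ∃ c : ℝ, f x = c := ⟨_, (EReal.coe_toReal hfin.1 hfin.2).symm⟩
  have hpos : ∀ᶠ p : ℝ × E in 𝓝[>] 0 ×ˢ 𝓝 w, 0 < p.1 :=
    tendsto_fst.eventually self_mem_nhdsWithin
  have hgap : Tendsto (fun p : ℝ × E => 2 * (B y p.2 - B v p.2)) (𝓝[>] 0 ×ˢ 𝓝 w)
      (𝓝 (2 * (B y w - B v w))) :=
    ((continuous_const.mul ((hB y).sub (hB v))).tendsto w).comp tendsto_snd
  have hblowup : Tendsto (fun p : ℝ × E => p.1⁻¹ * (2 * (B y p.2 - B v p.2)))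
      (𝓝[>] 0 ×ˢ 𝓝 w) atTop :=
    (tendsto_inv_nhdsGT_zero.comp tendsto_fst).atTop_mul_pos (by linarith) hgap
  refine top_unique ((EReal.tendsto_coe_nhds_top_iff.mpr hblowup).liminf_eq.ge.trans
    (liminf_le_liminf ?_))
  filter_upwards [hpos] with p hp
  refine coe_le_sdq2 hp hc (le_trans (le_of_eq ?_) (hy (x + p.1 • p.2)))
  simp only [hc, ← EReal.coe_add, add_sub_cancel_left, map_smul, smul_eq_mul]
  congr 1
  field_simp
  ring

lemma subderiv2_eq_top_of_notMem_criticalSubspace [IsTopologicalAddGroup E] [ContinuousSMul ℝ E]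
    {B : LinearMap.BilinForm ℝ E} (hB : ∀ v, Continuous (B v)) (hfin : IsFiniteAt f x)
    (hv : v ∈ relInterior (convexSubdiff (fun v w => B v w) f x))
    (hw : w ∉ criticalSubspace B (convexSubdiff (fun v w => B v w) f x) v) :
    subderiv2 (fun v w => B v w) f x v w = ⊤ := by
  obtain ⟨y, hy, hlt⟩ := exists_lt_of_mem_relInterior hv hw
  exact subderiv2_eq_top_of_lt hB hfin hy hlt

end SecondSubderivative

section Polyhedral

variable [AddCommGroup E] [Module ℝ E] {B : LinearMap.BilinForm ℝ E} {f : E → EReal}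

lemma convex_epiSet_of_isPolyhedral
    (hpoly : IsPolyhedral (ipProd fun v w => B v w) (epiSet f)) : Convex ℝ (epiSet f) := by
  obtain ⟨k, a, b, hepi⟩ := hpoly
  rw [hepi, Set.ofPred_forall]
  refine convex_iInter fun j => convex_halfSpace_le ⟨fun p q => ?_, fun s p => ?_⟩ (b j)
  · simp only [ipProd, Prod.fst_add, Prod.snd_add, map_add]
    ring
  · simp only [ipProd, Prod.smul_fst, Prod.smul_snd, map_smul, smul_eq_mul]
    ring

lemma mem_convexSubdiff_of_epiSet {x c : E} {r : ℝ} (hr : f x = (r : EReal))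
    (h : ∀ z s, (z, s) ∈ epiSet f → r + B c (z - x) ≤ s) :
    c ∈ convexSubdiff (fun v w => B v w) f x := by
  intro z
  rw [hr, ← EReal.coe_add]
  exact EReal.le_of_forall_lt_iff_le.mp fun s hs => EReal.coe_le_coe_iff.mpr (h z s hs.le)

lemma nonpos_of_epiSet_subset_halfSpace {x a : E} {r γ β : ℝ} (hr : f x = (r : EReal))
    (h : ∀ z s, (z, s) ∈ epiSet f → B a z + γ * s ≤ β) : γ ≤ 0 := by
  by_contra! hγ
  set δ : ℝ := (β - (B a x + γ * r) + 1) / γ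
  have hδ : 0 ≤ δ := div_nonneg (by linarith [h x r hr.le]) hγ.le
  have hviol := h x (r + δ) (by
    change f x ≤ _
    rw [hr, EReal.coe_le_coe_iff]
    linarith)
  rw [mul_add, mul_div_cancel₀ _ hγ.ne'] at hviol
  linarith

-- A constraint active at `(x, f x)` produces subgradients: `(-γ)⁻¹ • a` if it is not vertical,
-- and otherwise the recession direction `a` of the subdifferential.
lemma eq_zero_of_active_halfSpace {x w a : E} {r κ γ β : ℝ} (hr : f x = (r : EReal))
    (h : ∀ z s, (z, s) ∈ epiSet f → B a z + γ * s ≤ β) (hactive : B a x + γ * r = β)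
    (hne : (convexSubdiff (fun v w => B v w) f x).Nonempty)
    (hsub : ∀ c ∈ convexSubdiff (fun v w => B v w) f x, B c w = κ) : B a w + γ * κ = 0 := by
  rcases (nonpos_of_epiSet_subset_halfSpace hr h).lt_or_eq with hneg | rfl
  · have hmem : (-γ)⁻¹ • a ∈ convexSubdiff (fun v w => B v w) f x := by
      refine mem_convexSubdiff_of_epiSet hr fun z s hzs => ?_
      have hslope : (-γ)⁻¹ * (B a z - B a x) ≤ s - r := by
        rw [inv_mul_le_iff₀ (by linarith)]
        linarith [h z s hzs]
      rw [map_smul, LinearMap.smul_apply, map_sub, smul_eq_mul]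
      linarith
    have hκ := hsub _ hmem
    rw [map_smul, LinearMap.smul_apply, smul_eq_mul, inv_mul_eq_iff_eq_mul₀ (by linarith)] at hκ
    linarith
  · obtain ⟨c, hc⟩ := hne
    have hmem : c + a ∈ convexSubdiff (fun v w => B v w) f x := by
      refine mem_convexSubdiff_of_epiSet hr fun z s hzs => ?_
      have hcz : r + B c (z - x) ≤ s := by
        have := (hc z).trans hzs
        rwa [hr, ← EReal.coe_add, EReal.coe_le_coe_iff] at this
      rw [map_add, LinearMap.add_apply, map_sub (B a)]
      linarith [h z s hzs]
    have hκ := hsub _ hmem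
    rw [map_add, LinearMap.add_apply, hsub c hc] at hκ
    linarith

-- Along a direction on which all subgradients agree, the active constraints of the epigraph stay
-- active and the inactive ones stay inactive for a short time.
lemma eventually_le_of_isPolyhedral (hpoly : IsPolyhedral (ipProd fun v w => B v w) (epiSet f))
    {x w : E} {r κ : ℝ} (hr : f x = (r : EReal))
    (hne : (convexSubdiff (fun v w => B v w) f x).Nonempty)
    (hsub : ∀ c ∈ convexSubdiff (fun v w => B v w) f x, B c w = κ) :
    ∀ᶠ t : ℝ in 𝓝[>] 0, f (x + t • w) ≤ ((r + t * κ : ℝ) : EReal) := by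
  obtain ⟨k, a, b, hepi⟩ := hpoly
  have hmem z s : (z, s) ∈ epiSet f ↔ ∀ j, B (a j).1 z + (a j).2 * s ≤ b j := by
    rw [hepi]
    rfl
  change ∀ᶠ t : ℝ in 𝓝[>] 0, (x + t • w, r + t * κ) ∈ epiSet f
  simp only [hmem, eventually_all]
  intro j
  have hexpand (t : ℝ) : B (a j).1 (x + t • w) + (a j).2 * (r + t * κ) =
      (B (a j).1 x + (a j).2 * r) + t * (B (a j).1 w + (a j).2 * κ) := by
    rw [map_add, map_smul, smul_eq_mul]
    ring
  simp only [hexpand]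
  rcases ((hmem x r).1 hr.le j).eq_or_lt with hactive | hinactive
  · have hdir := eq_zero_of_active_halfSpace hr (fun z s hzs => (hmem z s).1 hzs j) hactive hne hsub
    exact Eventually.of_forall fun t => by rw [hdir, mul_zero, add_zero, hactive]
  · have hcont : Continuous fun t : ℝ =>
        (B (a j).1 x + (a j).2 * r) + t * (B (a j).1 w + (a j).2 * κ) := by fun_prop
    have hlt := (hcont.tendsto' 0 _ (by rw [zero_mul, add_zero])).eventually_lt_const hinactive
    filter_upwards [hlt.filter_mono nhdsWithin_le_nhds] with t ht using ht.le

end Polyhedral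

section Commutator

variable {m R : Type*} [Fintype m] [CommRing R] {X Y : Matrix m m R}

lemma trace_lie_mul (A B C : Matrix m m R) : (⁅A, B⁆ * C).trace = (A * ⁅B, C⁆).trace := by
  simp only [Ring.lie_def, sub_mul, mul_sub, trace_sub, ← mul_assoc]
  rw [trace_mul_cycle B A C, mul_assoc C B A, trace_mul_comm C (B * A),
    trace_mul_cycle A C B, mul_assoc B A C, ← mul_assoc]

lemma trace_mul_lie_eq_zero_of_commute {A : Matrix m m R} (h : Commute A X)
    (T : Matrix m m R) : (A * ⁅T, X⁆).trace = 0 := by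
  rw [trace_mul_comm, trace_lie_mul, h.symm.lie_eq, mul_zero, trace_zero]

lemma transpose_lie (A B : Matrix m m R) : ⁅A, B⁆ᵀ = ⁅Bᵀ, Aᵀ⁆ := by
  simp only [Ring.lie_def, transpose_sub, transpose_mul]

lemma trace_lie_mul_eq_neg (S A B : Matrix m m R) :
    (⁅S, A⁆ * B).trace = -(A * ⁅S, B⁆).trace := by
  rw [← trace_lie_mul A S B, ← trace_neg, ← neg_mul, Ring.lie_def, Ring.lie_def, neg_sub]

lemma trace_lie_mul_lie_comm (hYX : Commute Y X) (P Q : Matrix m m R) :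
    (⁅P, Y⁆ * ⁅Q, X⁆).trace = (⁅P, X⁆ * ⁅Q, Y⁆).trace := by
  have hjacobi : ⁅Y, ⁅Q, X⁆⁆ = ⁅X, ⁅Q, Y⁆⁆ := by
    have h : Q * (X * Y) = Q * (Y * X) := by rw [hYX.eq]
    have h' : X * Y * Q = Y * X * Q := by rw [hYX.eq]
    simp only [Ring.lie_def, mul_sub, sub_mul, ← mul_assoc] at h h' ⊢
    rw [h, h']
    abel
  rw [trace_lie_mul, hjacobi, ← trace_lie_mul]

lemma trace_lie_lie_mul_eq_zero (hYX : Commute Y X) {B : Matrix m m R} (hBX : Commute B X)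
    (P : Matrix m m R) : (⁅⁅P, X⁆, Y⁆ * B).trace = 0 := by
  have hcomm : Commute ⁅Y, B⁆ X := by
    rw [Ring.lie_def]
    exact (hYX.mul_left hBX).sub_left (hBX.mul_left hYX)
  rw [trace_lie_mul, trace_mul_comm, trace_mul_lie_eq_zero_of_commute hcomm]

end Commutator

section ExponentialConjugation

variable {𝔸 : Type*} [NormedRing 𝔸] [NormedAlgebra ℝ 𝔸] [CompleteSpace 𝔸]

lemma tendsto_exp_smul_second_order (S : 𝔸) :
    Tendsto (fun t : ℝ => (2 / t ^ 2) • (NormedSpace.exp (t • S) - 1 - t • S)) (𝓝[≠] 0)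
      (𝓝 (S * S)) := by
  have hpartial (t : ℝ) : (NormedSpace.expSeries ℝ 𝔸).partialSum 3 (t • S) =
      1 + t • S + (t ^ 2 / 2) • (S * S) := by
    simp [FormalMultilinearSeries.partialSum, Finset.sum_range_succ,
      NormedSpace.expSeries_apply_eq, pow_two, smul_smul, mul_comm, div_eq_mul_inv]
  have hsmul : Tendsto (fun t : ℝ => t • S) (𝓝 0) (𝓝 0) :=
    (continuous_id.smul continuous_const).tendsto' 0 0 (zero_smul ℝ S)
  have hcube : (fun t : ℝ => ‖t • S‖ ^ 3) =O[𝓝 0] fun t => t ^ 3 :=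
    .of_bound (‖S‖ ^ 3) (.of_forall fun t => by simp [norm_smul, mul_pow, mul_comm])
  have hrem : (fun t : ℝ => NormedSpace.exp (t • S) - (1 + t • S + (t ^ 2 / 2) • (S * S)))
      =o[𝓝 0] fun t => t ^ 2 := by
    have htaylor := ((NormedSpace.exp_hasFPowerSeriesAt_zero (𝕂 := ℝ)
      (𝔸 := 𝔸)).isBigO_sub_partialSum_pow 3).comp_tendsto hsmul
    simp only [Function.comp_def, zero_add, hpartial] at htaylor
    exact (htaylor.trans hcube).trans_isLittleO (Asymptotics.isLittleO_pow_pow (by norm_num))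
  have hlim := ((hrem.mono (nhdsWithin_le_nhds (s := {0}ᶜ))).tendsto_inv_smul_nhds_zero.const_smul
    (2 : ℝ)).add_const (S * S)
  rw [smul_zero, zero_add] at hlim
  refine hlim.congr' ?_
  filter_upwards [self_mem_nhdsWithin] with t (ht : t ≠ 0)
  match_scalars <;> field_simp
  ring

lemma hasDerivAt_exp_conj (S X : 𝔸) :
    HasDerivAt (fun t : ℝ => NormedSpace.exp (t • S) * X * NormedSpace.exp (t • -S)) ⁅S, X⁆ 0 := by
  have h := ((hasDerivAt_exp_smul_const S (0 : ℝ)).mul_const X).fun_mul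
    (hasDerivAt_exp_smul_const (-S) (0 : ℝ))
  simpa [Ring.lie_def, sub_eq_add_neg] using h

lemma exists_exp_smul_expansion (S : 𝔸) :
    ∃ M : ℝ → 𝔸, Tendsto M (𝓝[≠] 0) (𝓝 (S * S)) ∧
      ∀ t : ℝ, NormedSpace.exp (t • S) = 1 + t • S + (t ^ 2 / 2) • M t := by
  refine ⟨_, tendsto_exp_smul_second_order S, fun t => ?_⟩
  rcases eq_or_ne t 0 with rfl | ht
  · simp
  · rw [smul_smul, show t ^ 2 / 2 * (2 / t ^ 2) = 1 by field_simp, one_smul]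
    abel

lemma exists_exp_conj_expansion (S X W : 𝔸) :
    ∃ R : ℝ × 𝔸 → 𝔸,
      Tendsto R (𝓝[≠] 0 ×ˢ 𝓝 W) (𝓝 (⁅S, ⁅S, X⁆⁆ + (2 : ℝ) • ⁅S, W⁆)) ∧
      ∀ (t : ℝ) (W' : 𝔸), NormedSpace.exp (t • S) * (X + t • W') * NormedSpace.exp (t • -S) =
        X + t • (W' + ⁅S, X⁆) + (t ^ 2 / 2) • R (t, W') := by
  obtain ⟨M, hM, hexp⟩ := exists_exp_smul_expansion S
  obtain ⟨N, hN, hexp'⟩ := exists_exp_smul_expansion (-S)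
  let G : ℝ × 𝔸 × 𝔸 × 𝔸 → 𝔸 := fun ⟨t, P, Q, V⟩ =>
    P * X + X * Q + (2 : ℝ) • ((S + (t / 2) • P) * V + V * (-S + (t / 2) • Q)) +
      (2 : ℝ) • ((S + (t / 2) • P) * (X + t • V) * (-S + (t / 2) • Q))
  have hG : Continuous G := by fun_prop
  have hlim : G (0, S * S, -S * -S, W) = ⁅S, ⁅S, X⁆⁆ + (2 : ℝ) • ⁅S, W⁆ := by
    simp only [G, zero_div, zero_smul, add_zero, Ring.lie_def]
    simp only [mul_sub, sub_mul, mul_neg, neg_mul, neg_neg, mul_assoc]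
    module
  have hfst : Tendsto Prod.fst (𝓝[≠] (0 : ℝ) ×ˢ 𝓝 W) (𝓝[≠] 0) := tendsto_fst
  refine ⟨fun p => G (p.1, M p.1, N p.1, p.2), ?_, fun t V => ?_⟩
  · rw [← hlim]
    exact (hG.tendsto _).comp ((hfst.mono_right nhdsWithin_le_nhds).prodMk_nhds
      ((hM.comp hfst).prodMk_nhds ((hN.comp hfst).prodMk_nhds tendsto_snd)))
  · rw [hexp, hexp']
    simp only [G, Ring.lie_def, mul_add, add_mul, smul_mul_assoc, mul_smul_comm,
      smul_add, smul_smul, mul_neg, smul_neg, mul_one, one_mul, mul_assoc]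
    module

end ExponentialConjugation

section OrthogonalMatrices

variable {m : Type*} [Fintype m] [DecidableEq m]

lemma transpose_exp_of_transpose_eq_neg {S : Matrix m m ℝ} (hS : Sᵀ = -S) :
    (NormedSpace.exp S)ᵀ = NormedSpace.exp (-S) := by
  rw [← Matrix.exp_transpose, hS]

lemma exp_smul_mem_orthogonalGroup {S : Matrix m m ℝ} (hS : Sᵀ = -S) (t : ℝ) :
    NormedSpace.exp (t • S) ∈ Matrix.orthogonalGroup m ℝ := by
  have htS : (t • S)ᵀ = -(t • S) := by rw [transpose_smul, hS, smul_neg]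
  rw [mem_orthogonalGroup_iff, transpose_exp_of_transpose_eq_neg htS, Matrix.exp_neg]
  exact Matrix.mul_nonsing_inv _ ((Matrix.isUnit_iff_isUnit_det _).mp (Matrix.isUnit_exp _))

lemma transpose_mem_orthogonalGroup {U : Matrix m m ℝ} (hU : U ∈ Matrix.orthogonalGroup m ℝ) :
    Uᵀ ∈ Matrix.orthogonalGroup m ℝ :=
  Unitary.star_mem hU

lemma lie_conj_of_mem_orthogonalGroup {U : Matrix m m ℝ} (hU : U ∈ Matrix.orthogonalGroup m ℝ)
    (A B : Matrix m m ℝ) : ⁅U * A * Uᵀ, U * B * Uᵀ⁆ = U * ⁅A, B⁆ * Uᵀ := by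
  have hmul (C D : Matrix m m ℝ) : U * C * Uᵀ * (U * D * Uᵀ) = U * (C * D) * Uᵀ := by
    rw [← mul_assoc, ← mul_assoc (U * C * Uᵀ), mul_assoc (U * C) Uᵀ U,
      (mem_orthogonalGroup_iff' m ℝ).mp hU, mul_one, mul_assoc U C D]
  rw [Ring.lie_def, Ring.lie_def, hmul, hmul, mul_sub, sub_mul]

lemma eq_conj_of_mem_orthogonalGroup {U : Matrix m m ℝ} (hU : U ∈ Matrix.orthogonalGroup m ℝ)
    (A : Matrix m m ℝ) : U * (Uᵀ * A * U) * Uᵀ = A := by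
  rw [mul_assoc Uᵀ, ← mul_assoc U Uᵀ, (mem_orthogonalGroup_iff m ℝ).mp hU, one_mul, mul_assoc,
    (mem_orthogonalGroup_iff m ℝ).mp hU, mul_one]

lemma exists_orthonormalBasis_eigenvectors_of_commute {𝕜 F : Type*} [RCLike 𝕜]
    [NormedAddCommGroup F] [InnerProductSpace 𝕜 F] [FiniteDimensional 𝕜 F] {A B : F →ₗ[𝕜] F}
    (hA : A.IsSymmetric) (hB : B.IsSymmetric) (hAB : Commute A B) :
    ∃ (b : OrthonormalBasis (Fin (Module.finrank 𝕜 F)) 𝕜 F) (α β : Fin (Module.finrank 𝕜 F) → 𝕜),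
      ∀ i, A (b i) = α i • b i ∧ B (b i) = β i • b i := by
  classical
  let V : 𝕜 × 𝕜 → Submodule 𝕜 F := fun i =>
    Module.End.eigenspace A i.2 ⊓ Module.End.eigenspace B i.1
  have hV : DirectSum.IsInternal V := hA.directSum_isInternal_of_commute hB hAB
  have : Fintype {i // V i ≠ ⊥} :=
    (Submodule.finite_ne_bot_of_iSupIndep hV.submodule_iSupIndep).fintype
  have hVne := DirectSum.isInternal_ne_bot_iff.mpr hV
  have horth := (hA.orthogonalFamily_eigenspace_inf_eigenspace hB).comp
    (Subtype.val_injective (p := fun i => V i ≠ ⊥))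
  have hmem i := hVne.subordinateOrthonormalBasis_subordinate rfl i horth
  exact ⟨hVne.subordinateOrthonormalBasis rfl horth,
    fun i => (hVne.subordinateOrthonormalBasisIndex rfl i horth).1.2,
    fun i => (hVne.subordinateOrthonormalBasisIndex rfl i horth).1.1, fun i =>
    ⟨Module.End.mem_eigenspace_iff.mp (hmem i).1, Module.End.mem_eigenspace_iff.mp (hmem i).2⟩⟩

lemma eq_conj_diagonal_of_orthonormalBasis {X : Matrix m m ℝ} {x : m → ℝ}
    (b : OrthonormalBasis m ℝ (EuclideanSpace ℝ m))
    (hb : ∀ i, Matrix.toEuclideanLin X (b i) = x i • b i) :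
    X = (EuclideanSpace.basisFun m ℝ).toBasis.toMatrix b * diagonal x *
      ((EuclideanSpace.basisFun m ℝ).toBasis.toMatrix b)ᵀ := by
  set U := (EuclideanSpace.basisFun m ℝ).toBasis.toMatrix b
  have hU : U * Uᵀ = 1 := (mem_orthogonalGroup_iff m ℝ).mp
    (OrthonormalBasis.toMatrix_orthonormalBasis_mem_orthogonal _ _)
  have hXU : X * U = U * diagonal x := by
    ext i j
    have := congrArg (fun v : EuclideanSpace ℝ m => v i) (hb j)
    rw [mul_diagonal]
    simpa [U, Module.Basis.toMatrix_apply, mul_apply, mulVec, dotProduct, mul_comm] using this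
  rw [← hXU, mul_assoc, hU, mul_one]

lemma exists_orthogonal_diagonalization_of_commute {X Y : Matrix m m ℝ} (hX : X.IsSymm)
    (hY : Y.IsSymm) (hXY : Commute X Y) :
    ∃ U ∈ Matrix.orthogonalGroup m ℝ, ∃ x y : m → ℝ,
      X = U * diagonal x * Uᵀ ∧ Y = U * diagonal y * Uᵀ := by
  have hcomm : Commute (Matrix.toEuclideanLin X) (Matrix.toEuclideanLin Y) :=
    hXY.map (Matrix.toLpLinAlgEquiv 2)
  obtain ⟨b, α, β, hb⟩ := exists_orthonormalBasis_eigenvectors_of_commute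
    (isSymmetric_toEuclideanLin_iff.mpr hX) (isSymmetric_toEuclideanLin_iff.mpr hY) hcomm
  let e : Fin (Module.finrank ℝ (EuclideanSpace ℝ m)) ≃ m :=
    Fintype.equivOfCardEq (by simp)
  refine ⟨_, OrthonormalBasis.toMatrix_orthonormalBasis_mem_orthogonal _ (b.reindex e),
    α ∘ e.symm, β ∘ e.symm, eq_conj_diagonal_of_orthonormalBasis _ fun i => ?_,
    eq_conj_diagonal_of_orthonormalBasis _ fun i => ?_⟩
  · simpa using (hb (e.symm i)).1
  · simpa using (hb (e.symm i)).2

/-- A linear choice of `T W` such that `W - ⁅⁅T W, X⁆, X⁆` commutes with `X`. For symmetric `X`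
this splits every `W` into a part commuting with `X` and the velocity `⁅⁅T W, X⁆, X⁆` at `X` of the
orbit of `X` under conjugation by the one-parameter group generated by `⁅T W, X⁆`. -/
structure IsCommutatorSplitting (X : Matrix m m ℝ) (T : Matrix m m ℝ →ₗ[ℝ] Matrix m m ℝ) :
    Prop where
  transpose_apply : ∀ W, (T W)ᵀ = T Wᵀ
  commute_sub : ∀ W, Commute (W - ⁅⁅T W, X⁆, X⁆) X

-- Where `x i = x j` the weight is the junk value `0⁻¹ = 0`, which is what is needed there.
lemma commute_diagonal_of_hadamard (x : m → ℝ) (W : Matrix m m ℝ) :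
    Commute (W - ⁅⁅(of fun i j => ((x i - x j) ^ 2)⁻¹) ⊙ W, diagonal x⁆, diagonal x⁆)
      (diagonal x) := by
  rw [commute_iff_lie_eq]
  ext i j
  rcases eq_or_ne (x i) (x j) with h | h
  · simp [Ring.lie_def, h, mul_comm]
  · have := sub_ne_zero.mpr h
    simp only [Ring.lie_def, Matrix.sub_apply, mul_diagonal, diagonal_mul, hadamard_apply,
      of_apply, Matrix.zero_apply]
    field_simp
    ring

end OrthogonalMatrices

lemma exists_isCommutatorSplitting {m : Type*} [Fintype m] {X : Matrix m m ℝ}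
    (hX : X.IsSymm) : ∃ T, IsCommutatorSplitting X T := by
  classical
  obtain ⟨U, hU, x, -, hXU, -⟩ := exists_orthogonal_diagonalization_of_commute hX hX (.refl X)
  let D : Matrix m m ℝ := of fun i j => ((x i - x j) ^ 2)⁻¹
  have hD : Dᵀ = D := by
    ext i j
    simp only [D, transpose_apply, of_apply, ← neg_sub (x i), neg_sq]
  let T : Matrix m m ℝ →ₗ[ℝ] Matrix m m ℝ :=
    { toFun W := U * (D ⊙ (Uᵀ * W * U)) * Uᵀ
      map_add' V W := by simp only [mul_add, add_mul, hadamard_add]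
      map_smul' c W := by
        simp only [Matrix.mul_smul, Matrix.smul_mul, hadamard_smul, RingHom.id_apply] }
  refine ⟨T, fun W => ?_, fun W => ?_⟩
  · simp [T, transpose_mul, transpose_hadamard, hD, mul_assoc]
  · have hW := commute_diagonal_of_hadamard x (Uᵀ * W * U)
    rw [commute_iff_lie_eq] at hW ⊢
    nth_rw 1 [← eq_conj_of_mem_orthogonalGroup hU W]
    simp only [T, LinearMap.coe_mk, AddHom.coe_mk, hXU, lie_conj_of_mem_orthogonalGroup hU,
      ← mul_sub, ← sub_mul]
    rw [hW, mul_zero, zero_mul]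

section SymmetricMatrices

variable {n : ℕ}

/-- The trace inner product `ipM` bundled as a bilinear form. -/
def traceForm (n : ℕ) : LinearMap.BilinForm ℝ (Sym n) :=
  LinearMap.mk₂ ℝ ipM (fun A B C => by simp [ipM, add_mul]) (fun c A B => by simp [ipM])
    (fun A B C => by simp [ipM, mul_add]) (fun c A B => by simp [ipM])

lemma continuous_traceForm (A : Sym n) : Continuous (traceForm n A) := by
  change Continuous fun B : Sym n => (A.val * B.val).trace
  fun_prop

lemma ipM_sub_right (A B C : Sym n) : ipM A (B - C) = ipM A B - ipM A C :=
  map_sub (traceForm n A) B C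

lemma ipM_smul_right (A B : Sym n) (t : ℝ) : ipM A (t • B) = t * ipM A B :=
  map_smul (traceForm n A) t B

lemma ipM_diagSym (A : Sym n) (w : Fin n → ℝ) : ipM A (diagSym w) = ipV A.val.diag w := by
  simp [ipM, ipV, diagSym, trace, mul_diagonal]

/-- Conjugation `A ↦ U A Uᵀ` as a linear endomorphism of `Sⁿ`. -/
def conjSym (U : Matrix (Fin n) (Fin n) ℝ) : Sym n →ₗ[ℝ] Sym n where
  toFun A := ⟨U * A.val * Uᵀ, show (U * A.val * Uᵀ)ᵀ = U * A.val * Uᵀ by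
    rw [transpose_mul, transpose_mul, transpose_transpose, A.2, mul_assoc]⟩
  map_add' A B := Subtype.ext (by simp [mul_add, add_mul])
  map_smul' c A := Subtype.ext (by simp)

lemma ipM_conjSym_right (U : Matrix (Fin n) (Fin n) ℝ) (A B : Sym n) :
    ipM A (conjSym U B) = ipM (conjSym Uᵀ A) B := by
  simp only [ipM, conjSym, LinearMap.coe_mk, AddHom.coe_mk, transpose_transpose]
  rw [← mul_assoc, trace_mul_comm, ← mul_assoc, ← mul_assoc]

lemma conjSym_transpose_conjSym {U : Matrix (Fin n) (Fin n) ℝ}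
    (hU : U ∈ Matrix.orthogonalGroup (Fin n) ℝ) (A : Sym n) : conjSym Uᵀ (conjSym U A) = A := by
  refine Subtype.ext ?_
  have h := eq_conj_of_mem_orthogonalGroup (transpose_mem_orthogonalGroup hU) A.val
  rwa [transpose_transpose] at h

lemma exists_conjSym_diagSym_of_commute {A B : Sym n} (hAB : Commute A.val B.val) :
    ∃ U ∈ Matrix.orthogonalGroup (Fin n) ℝ, ∃ a b : Fin n → ℝ,
      A = conjSym U (diagSym a) ∧ B = conjSym U (diagSym b) := by
  obtain ⟨U, hU, a, b, hA, hB⟩ := exists_orthogonal_diagonalization_of_commute A.2 B.2 hAB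
  exact ⟨U, hU, a, b, Subtype.ext hA, Subtype.ext hB⟩

lemma diagSym_add_smul (x w : Fin n → ℝ) (t : ℝ) :
    diagSym (x + t • w) = diagSym x + t • diagSym w :=
  Subtype.ext (by simp [diagSym, ← diagonal_smul])

end SymmetricMatrices

section OrthogonallyInvariant

variable {n : ℕ} {f : Sym n → EReal} {X Y : Sym n} {c : ℝ}

/-- Invariance of a function on `Sⁿ` under conjugation by orthogonal matrices; this is the only
property of the eigenvalue map used in the second-order estimates. -/
def OrthInvariant (f : Sym n → EReal) : Prop :=
  ∀ U ∈ Matrix.orthogonalGroup (Fin n) ℝ, ∀ A, f (conjSym U A) = f A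

lemma OrthInvariant.conjSym_mem_convexSubdiff (hf : OrthInvariant f)
    {U : Matrix (Fin n) (Fin n) ℝ} (hU : U ∈ Matrix.orthogonalGroup (Fin n) ℝ)
    (hY : Y ∈ convexSubdiff ipM f X) : conjSym U Y ∈ convexSubdiff ipM f (conjSym U X) := by
  intro Z
  have hU' := transpose_mem_orthogonalGroup hU
  have h := hY (conjSym Uᵀ Z)
  rw [hf _ hU', ipM_sub_right, ipM_conjSym_right, transpose_transpose] at h
  rwa [hf _ hU, ipM_sub_right, ipM_conjSym_right U, conjSym_transpose_conjSym hU]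

lemma OrthInvariant.coe_add_ipM_conjSym_le (hf : OrthInvariant f) (hc : f X = (c : EReal))
    (hY : Y ∈ convexSubdiff ipM f X) {U : Matrix (Fin n) (Fin n) ℝ}
    (hU : U ∈ Matrix.orthogonalGroup (Fin n) ℝ) (A : Sym n) :
    ((c + ipM Y (conjSym U A - X) : ℝ) : EReal) ≤ f A := by
  have h := hY (conjSym U A)
  rwa [hf U hU, hc, ← EReal.coe_add] at h

variable {S : Matrix (Fin n) (Fin n) ℝ}

lemma coe_conjSym_exp (hS : Sᵀ = -S) (t : ℝ) (A : Sym n) :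
    (conjSym (NormedSpace.exp (t • S)) A).val =
      NormedSpace.exp (t • S) * A.val * NormedSpace.exp (t • -S) := by
  rw [smul_neg, ← transpose_exp_of_transpose_eq_neg (by rw [transpose_smul, hS, smul_neg])]
  rfl

attribute [local instance] Matrix.linftyOpNormedRing Matrix.linftyOpNormedAlgebra

lemma hasDerivAt_ipM_conjSym_exp (hS : Sᵀ = -S) (X Y : Sym n) :
    HasDerivAt (fun t : ℝ => ipM Y (conjSym (NormedSpace.exp (t • S)) X))
      (Y.val * ⁅S, X.val⁆).trace 0 := by
  let φ : Matrix (Fin n) (Fin n) ℝ →L[ℝ] ℝ :=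
    (traceLinearMap (Fin n) ℝ ℝ ∘ₗ LinearMap.mulLeft ℝ Y.val).toContinuousLinearMap
  simp only [ipM, coe_conjSym_exp hS]
  exact φ.hasFDerivAt.comp_hasDerivAt 0 (hasDerivAt_exp_conj S X.val)

-- Fermat's rule: by invariance, `t ↦ ⟨Y, e^{tS} X e^{-tS}⟩` is maximal at `t = 0`.
lemma OrthInvariant.trace_mul_lie_eq_zero (hf : OrthInvariant f) (hc : f X = (c : EReal))
    (hY : Y ∈ convexSubdiff ipM f X) (hS : Sᵀ = -S) : (Y.val * ⁅S, X.val⁆).trace = 0 := by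
  refine IsLocalMax.hasDerivAt_eq_zero (.of_forall fun t => ?_) (hasDerivAt_ipM_conjSym_exp hS X Y)
  have h := hf.coe_add_ipM_conjSym_le hc hY (exp_smul_mem_orthogonalGroup hS t) X
  rw [hc, EReal.coe_le_coe_iff, ipM_sub_right] at h
  have h0 : conjSym (NormedSpace.exp ((0 : ℝ) • S)) X = X :=
    Subtype.ext (by rw [coe_conjSym_exp hS]; simp)
  rw [h0]
  linarith

lemma OrthInvariant.commute_of_mem_convexSubdiff (hf : OrthInvariant f) (hc : f X = (c : EReal))
    (hY : Y ∈ convexSubdiff ipM f X) : Commute Y.val X.val := by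
  have hskew : ⁅Y.val, X.val⁆ᵀ = -⁅Y.val, X.val⁆ := by
    rw [transpose_lie, X.2, Y.2, Ring.lie_def, Ring.lie_def, neg_sub]
  have h := hf.trace_mul_lie_eq_zero hc hY hskew
  rw [commute_iff_lie_eq, ← trace_mul_conjTranspose_self_eq_zero_iff,
    conjTranspose_eq_transpose_of_trivial, hskew, mul_neg, trace_neg, neg_eq_zero, trace_lie_mul]
  rw [Ring.lie_def, mul_sub, trace_sub] at h ⊢
  linarith

lemma exists_conjSym_exp_expansion (hS : Sᵀ = -S) (X W : Sym n) :
    ∃ R : ℝ × Sym n → Matrix (Fin n) (Fin n) ℝ,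
      Tendsto R (𝓝[>] 0 ×ˢ 𝓝 W) (𝓝 (⁅S, ⁅S, X.val⁆⁆ + (2 : ℝ) • ⁅S, W.val⁆)) ∧
      ∀ t W', (conjSym (NormedSpace.exp (t • S)) (X + t • W')).val =
        X.val + t • (W'.val + ⁅S, X.val⁆) + (t ^ 2 / 2) • R (t, W') := by
  obtain ⟨R, hR, hexp⟩ := exists_exp_conj_expansion S X.val W.val
  have hfst : Tendsto Prod.fst (𝓝[>] (0 : ℝ) ×ˢ 𝓝 W) (𝓝[≠] 0) :=
    tendsto_fst.mono_right (nhdsGT_le_nhdsNE 0)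
  have hsnd : Tendsto (fun p : ℝ × Sym n => p.2.val) (𝓝[>] 0 ×ˢ 𝓝 W) (𝓝 W.val) :=
    (continuous_subtype_val.tendsto W).comp tendsto_snd
  refine ⟨fun p => R (p.1, p.2.val), hR.comp (hfst.prodMk hsnd), fun t W' => ?_⟩
  rw [coe_conjSym_exp hS]
  exact hexp t W'.val

lemma OrthInvariant.exists_ipM_conjSym_exp_expansion (hf : OrthInvariant f)
    (hc : f X = (c : EReal)) (hY : Y ∈ convexSubdiff ipM f X) (hS : Sᵀ = -S) (W : Sym n) :
    ∃ K : ℝ × Sym n → ℝ, Tendsto K (𝓝[>] 0 ×ˢ 𝓝 W)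
        (𝓝 ((Y.val * ⁅S, ⁅S, X.val⁆⁆).trace + 2 * (Y.val * ⁅S, W.val⁆).trace)) ∧
      ∀ t W', ipM Y (conjSym (NormedSpace.exp (t • S)) (X + t • W') - X) =
        t * ipM Y W' + t ^ 2 / 2 * K (t, W') := by
  obtain ⟨R, hR, hexp⟩ := exists_conjSym_exp_expansion hS X W
  have hpair : Continuous fun A : Matrix (Fin n) (Fin n) ℝ => (Y.val * A).trace := by fun_prop
  refine ⟨fun p => (Y.val * R p).trace, ?_, fun t W' => ?_⟩
  · simpa only [mul_add, mul_smul_comm, trace_add, trace_smul, smul_eq_mul, Function.comp_def]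
      using (hpair.tendsto _).comp hR
  · rw [ipM_sub_right, ipM, hexp]
    simp only [ipM, mul_add, mul_smul_comm, trace_add, trace_smul, smul_eq_mul,
      hf.trace_mul_lie_eq_zero hc hY hS]
    ring

lemma OrthInvariant.coe_le_subderiv2 (hf : OrthInvariant f) (hc : f X = (c : EReal))
    (hY : Y ∈ convexSubdiff ipM f X) (hS : Sᵀ = -S) (W : Sym n) :
    (((Y.val * ⁅S, ⁅S, X.val⁆⁆).trace + 2 * (Y.val * ⁅S, W.val⁆).trace : ℝ) : EReal) ≤
      subderiv2 ipM f X Y W := by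
  obtain ⟨K, hK, hexp⟩ := hf.exists_ipM_conjSym_exp_expansion hc hY hS W
  refine coe_le_subderiv2_of_tendsto hc hK fun t _ W' => ?_
  rw [add_assoc, ← hexp]
  exact hf.coe_add_ipM_conjSym_le hc hY (exp_smul_mem_orthogonalGroup hS t) _

lemma tendsto_conjSym_exp_velocity (hS : Sᵀ = -S) {B W : Sym n}
    (hW : W.val = B.val + ⁅S, X.val⁆) :
    Tendsto (fun t : ℝ => t⁻¹ • (conjSym (NormedSpace.exp (t • S)) (X + t • B) - X)) (𝓝[>] 0)
      (𝓝 W) := by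
  obtain ⟨R, hR, hexp⟩ := exists_conjSym_exp_expansion hS X B
  have hRB := hR.comp (tendsto_id.prodMk (tendsto_const_nhds (x := B)))
  have hlim : Tendsto (fun t : ℝ => W.val + (t / 2) • R (t, B)) (𝓝[>] 0) (𝓝 W.val) := by
    have hhalf : Tendsto (fun t : ℝ => t / 2) (𝓝[>] 0) (𝓝 0) :=
      ((continuous_id.div_const 2).tendsto' 0 0 (zero_div 2)).mono_left nhdsWithin_le_nhds
    simpa using (hhalf.smul hRB).const_add W.val
  rw [tendsto_subtype_rng]
  refine hlim.congr' ?_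
  filter_upwards [self_mem_nhdsWithin] with t (ht : 0 < t)
  have hscale : t⁻¹ * (t ^ 2 / 2) = t / 2 := by field_simp
  rw [Submodule.coe_smul, Submodule.coe_sub, hexp, add_assoc, add_sub_cancel_left, smul_add,
    inv_smul_smul₀ ht.ne', smul_smul, hscale, hW]

lemma OrthInvariant.hasRecoveryCurve (hf : OrthInvariant f) (hc : f X = (c : EReal))
    (hY : Y ∈ convexSubdiff ipM f X) (hS : Sᵀ = -S) {B W : Sym n}
    (hW : W.val = B.val + ⁅S, X.val⁆)
    (hB : ∀ᶠ t : ℝ in 𝓝[>] 0, f (X + t • B) = ((c + t * ipM Y B : ℝ) : EReal)) :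
    HasRecoveryCurve ipM f X Y W
      ((-((Y.val * ⁅S, ⁅S, X.val⁆⁆).trace + 2 * (Y.val * ⁅S, B.val⁆).trace) : ℝ) : EReal) := by
  obtain ⟨K, hK, hexp⟩ := hf.exists_ipM_conjSym_exp_expansion hc hY hS B
  have hKB := hK.comp (tendsto_id.prodMk (tendsto_const_nhds (x := B)))
  refine ⟨_, tendsto_conjSym_exp_velocity hS hW,
    ((continuous_coe_real_ereal.tendsto _).comp hKB.neg).congr' ?_⟩
  filter_upwards [hB, self_mem_nhdsWithin] with t hBt (ht : 0 < t)
  refine (sdq2_eq_coe ht hc ?_).symm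
  rw [smul_inv_smul₀ ht.ne', add_sub_cancel, hf _ (exp_smul_mem_orthogonalGroup hS t), hBt,
    ipM_smul_right, hexp]
  congr 1
  simp only [Function.comp_apply, id_eq]
  field_simp
  ring

end OrthogonallyInvariant

section SpectralFunctions

lemma exists_perm_of_map_univ_eq {ι α : Type*} [Fintype ι] {a b : ι → α}
    (h : Finset.univ.val.map a = Finset.univ.val.map b) : ∃ σ : Equiv.Perm ι, b ∘ σ = a := by
  classical
  have hcard (c : α) : Fintype.card {i // a i = c} = Fintype.card {i // b i = c} := by
    have hcount := congrArg (Multiset.count c) h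
    rw [Multiset.count_map, Multiset.count_map] at hcount
    simpa only [Fintype.card_subtype, Finset.card_def, Finset.filter_val, eq_comm] using hcount
  exact ⟨Equiv.ofFiberEquiv fun c => Fintype.equivOfCardEq (hcard c),
    funext (Equiv.ofFiberEquiv_map _)⟩

variable {n : ℕ} {θ : (Fin n → ℝ) → EReal}

lemma eigval_conjSym {U : Matrix (Fin n) (Fin n) ℝ} (hU : U ∈ Matrix.orthogonalGroup (Fin n) ℝ)
    (A : Sym n) : eigval (conjSym U A).val = eigval A.val := by
  have hA : A.val.IsHermitian := A.2
  have hUA : (conjSym U A).val.IsHermitian := (conjSym U A).2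
  have hcharpoly : (conjSym U A).val.charpoly = A.val.charpoly := by
    change (U * A.val * Uᵀ).charpoly = _
    rw [charpoly_mul_comm, ← mul_assoc, (mem_orthogonalGroup_iff' _ _).mp hU, one_mul]
  rw [eigval, eigval, dif_pos hA, dif_pos hUA,
    (hUA.eigenvalues_eq_eigenvalues_iff hA).mpr hcharpoly]

lemma orthInvariant_specFn (θ : (Fin n → ℝ) → EReal) : OrthInvariant (specFn θ) :=
  fun _ hU A => congrArg θ (eigval_conjSym hU A)

lemma exists_perm_eigenvalues_diagonal {z : Fin n → ℝ} (hz : (diagonal z).IsHermitian) :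
    ∃ σ : Equiv.Perm (Fin n), z ∘ σ = hz.eigenvalues := by
  refine exists_perm_of_map_univ_eq ?_
  have hroots := hz.roots_charpoly_eq_eigenvalues
  rw [charpoly_diagonal, Polynomial.roots_prod _ _
    (Finset.prod_ne_zero_iff.mpr fun i _ => Polynomial.X_sub_C_ne_zero (z i))] at hroots
  simpa using hroots.symm

lemma specFn_diagSym (hsym : SymmetricFn θ) (z : Fin n → ℝ) : specFn θ (diagSym z) = θ z := by
  have hz : (diagonal z).IsHermitian := (diagSym z).2
  obtain ⟨σ, hσ⟩ := exists_perm_eigenvalues_diagonal hz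
  change θ (eigval (diagonal z)) = θ z
  rw [eigval, dif_pos hz, hsym, ← hσ]
  exact hsym z σ

lemma mulVec_le_of_mem_doublyStochastic (hsym : SymmetricFn θ) (hconv : Convex ℝ (epiSet θ))
    {D : Matrix (Fin n) (Fin n) ℝ} (hD : D ∈ doublyStochastic ℝ (Fin n)) (z : Fin n → ℝ) :
    θ (D *ᵥ z) ≤ θ z := by
  obtain ⟨w, hw_nonneg, hw_sum, hwD⟩ := exists_eq_sum_perm_of_mem_doublyStochastic hD
  refine EReal.le_of_forall_lt_iff_le.mp fun r hr => ?_
  have hperm (σ : Equiv.Perm (Fin n)) : (z ∘ σ, r) ∈ epiSet θ := (hsym z σ).trans_le hr.le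
  have hmem := hconv.sum_mem (fun σ _ => hw_nonneg σ) hw_sum fun σ _ => hperm σ
  have hsum : ∑ σ, w σ • (z ∘ σ, r) = (D *ᵥ z, r) := by
    simp only [Prod.smul_mk, ← hwD, sum_mulVec, smul_mulVec, permMatrix_mulVec]
    refine Prod.ext (by simp [Prod.fst_sum]) ?_
    simp [Prod.snd_sum, ← Finset.sum_mul, hw_sum]
  rwa [hsum] at hmem

lemma hadamard_self_mem_doublyStochastic {m : Type*} [Fintype m] [DecidableEq m]
    {U : Matrix m m ℝ} (hU : U ∈ Matrix.orthogonalGroup m ℝ) : U ⊙ U ∈ doublyStochastic ℝ m := by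
  refine mem_doublyStochastic_iff_sum.mpr ⟨fun i j => mul_self_nonneg _, fun i => ?_, fun j => ?_⟩
  · simpa [mul_apply] using congrFun₂ ((mem_orthogonalGroup_iff _ _).mp hU) i i
  · simpa [mul_apply] using congrFun₂ ((mem_orthogonalGroup_iff' _ _).mp hU) j j

lemma diag_conjSym_diagSym (U : Matrix (Fin n) (Fin n) ℝ) (z : Fin n → ℝ) :
    (conjSym U (diagSym z)).val.diag = (U ⊙ U) *ᵥ z := by
  ext i
  change (U * diagonal z * Uᵀ) i i = _
  simp only [mul_apply (N := Uᵀ), mul_diagonal, transpose_apply, mulVec, dotProduct,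
    hadamard_apply, mul_right_comm]

-- Schur: the diagonal is a doubly stochastic average of the eigenvalues.
lemma apply_diag_le_specFn (hsym : SymmetricFn θ) (hconv : Convex ℝ (epiSet θ)) (A : Sym n) :
    θ A.val.diag ≤ specFn θ A := by
  obtain ⟨U, hU, z, -, rfl, -⟩ := exists_conjSym_diagSym_of_commute (Commute.refl A.val)
  rw [diag_conjSym_diagSym, orthInvariant_specFn θ U hU, specFn_diagSym hsym]
  exact mulVec_le_of_mem_doublyStochastic hsym hconv (hadamard_self_mem_doublyStochastic hU) z

lemma diagSym_mem_convexSubdiff (hsym : SymmetricFn θ) (hconv : Convex ℝ (epiSet θ))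
    {a x : Fin n → ℝ} (ha : a ∈ convexSubdiff ipV θ x) :
    diagSym a ∈ convexSubdiff ipM (specFn θ) (diagSym x) := by
  intro Z
  have hpair : ipM (diagSym a) (Z - diagSym x) = ipV a (Z.val.diag - x) := by
    simp [ipM, ipV, diagSym, trace, diagonal_mul, mul_sub]
  rw [hpair, specFn_diagSym hsym]
  exact (ha Z.val.diag).trans (apply_diag_le_specFn hsym hconv Z)

lemma diag_mem_convexSubdiff (hsym : SymmetricFn θ) {x : Fin n → ℝ} {Y : Sym n}
    (hY : Y ∈ convexSubdiff ipM (specFn θ) (diagSym x)) :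
    Y.val.diag ∈ convexSubdiff ipV θ x := by
  intro z
  have h := hY (diagSym z)
  have hsub : diagSym z - diagSym x = diagSym (z - x) := Subtype.ext (diagonal_sub z x)
  rwa [hsub, ipM_diagSym, specFn_diagSym hsym, specFn_diagSym hsym] at h

lemma eventually_specFn_diagSym_le (hsym : SymmetricFn θ)
    (hpoly : IsPolyhedral (ipProd ipV) (epiSet θ)) {x b : Fin n → ℝ} {c κ : ℝ}
    (hc : specFn θ (diagSym x) = c)
    (hne : (convexSubdiff ipM (specFn θ) (diagSym x)).Nonempty)
    (hcrit : ∀ Y ∈ convexSubdiff ipM (specFn θ) (diagSym x), ipM Y (diagSym b) = κ) :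
    ∀ᶠ t : ℝ in 𝓝[>] 0, specFn θ (diagSym x + t • diagSym b) ≤ ((c + t * κ : ℝ) : EReal) := by
  simp only [← diagSym_add_smul, specFn_diagSym hsym] at hc ⊢
  have hpoly' : IsPolyhedral (ipProd fun v w => dotProductBilin ℝ ℝ v w) (epiSet θ) := hpoly
  refine eventually_le_of_isPolyhedral hpoly' hc ?_ fun a ha => ?_
  · obtain ⟨Y, hY⟩ := hne
    exact ⟨_, diag_mem_convexSubdiff hsym hY⟩
  · rw [← hcrit _ (diagSym_mem_convexSubdiff hsym (convex_epiSet_of_isPolyhedral hpoly') ha),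
      ipM_diagSym]
    simp [diagSym, ipV, dotProductBilin, dotProduct]

lemma eventually_specFn_add_smul_eq (hsym : SymmetricFn θ)
    (hpoly : IsPolyhedral (ipProd ipV) (epiSet θ)) {X Y B : Sym n} {c : ℝ}
    (hc : specFn θ X = (c : EReal)) (hY : Y ∈ convexSubdiff ipM (specFn θ) X)
    (hBX : Commute B.val X.val)
    (hcrit : ∀ Y' ∈ convexSubdiff ipM (specFn θ) X, ipM Y' B = ipM Y B) :
    ∀ᶠ t : ℝ in 𝓝[>] 0, specFn θ (X + t • B) = ((c + t * ipM Y B : ℝ) : EReal) := by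
  have hinv := orthInvariant_specFn θ
  have hge (t : ℝ) : ((c + t * ipM Y B : ℝ) : EReal) ≤ specFn θ (X + t • B) := by
    have h := hY (X + t • B)
    rwa [add_sub_cancel_left, ipM_smul_right, hc, ← EReal.coe_add] at h
  suffices hle : ∀ᶠ t : ℝ in 𝓝[>] 0, specFn θ (X + t • B) ≤ ((c + t * ipM Y B : ℝ) : EReal) from
    hle.mono fun t ht => ht.antisymm (hge t)
  obtain ⟨U, hU, x, b, hX, hB⟩ := exists_conjSym_diagSym_of_commute hBX.symm
  have hpullback (t : ℝ) : specFn θ (X + t • B) = specFn θ (diagSym x + t • diagSym b) := by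
    rw [hX, hB, ← map_smul, ← map_add, hinv U hU]
  simp only [hpullback]
  refine eventually_specFn_diagSym_le hsym hpoly (by rw [← hc, hX, hinv U hU]) ?_ fun Y' hY' => ?_
  · have hY' := hinv.conjSym_mem_convexSubdiff (transpose_mem_orthogonalGroup hU) hY
    rw [hX, conjSym_transpose_conjSym hU] at hY'
    exact ⟨_, hY'⟩
  · have hUY' := hinv.conjSym_mem_convexSubdiff hU hY'
    rw [← hX] at hUY'
    rw [← hcrit _ hUY', hB, ipM_conjSym_right, conjSym_transpose_conjSym hU]

end SpectralFunctions

section Curvature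

variable {n : ℕ} {X Y : Sym n} {T : Matrix (Fin n) (Fin n) ℝ →ₗ[ℝ] Matrix (Fin n) (Fin n) ℝ}

namespace IsCommutatorSplitting

lemma transpose_generator (hT : IsCommutatorSplitting X.val T) (W : Sym n) :
    ⁅T W.val, X.val⁆ᵀ = -⁅T W.val, X.val⁆ := by
  rw [transpose_lie, hT.transpose_apply, X.2, W.2, Ring.lie_def, Ring.lie_def, neg_sub]

lemma isSymm_lie_generator (hT : IsCommutatorSplitting X.val T) (W A : Sym n) :
    ⁅⁅T W.val, X.val⁆, A.val⁆.IsSymm := by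
  rw [IsSymm, transpose_lie, hT.transpose_generator, A.2]
  simp only [Ring.lie_def]
  noncomm_ring

/-- The component of `W` commuting with `X` in the splitting given by `T`. -/
def commutingPart (hT : IsCommutatorSplitting X.val T) (W : Sym n) : Sym n :=
  W - ⟨⁅⁅T W.val, X.val⁆, X.val⁆, hT.isSymm_lie_generator W X⟩

/-- The operator `W ↦ ⁅⁅T W, X⁆, Y⁆` on `Sⁿ` representing the second subderivative at `X` for `Y`
of an orthogonally invariant function. -/
def curvature (hT : IsCommutatorSplitting X.val T) (Y : Sym n) : Sym n →ₗ[ℝ] Sym n where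
  toFun W := ⟨⁅⁅T W.val, X.val⁆, Y.val⁆, hT.isSymm_lie_generator W Y⟩
  map_add' V W := Subtype.ext <| by
    simp only [Submodule.coe_add, map_add, Ring.lie_def]
    noncomm_ring
  map_smul' c W := Subtype.ext (by simp [Ring.lie_def, smul_sub, mul_sub, sub_mul])

lemma coe_eq_commutingPart_add (hT : IsCommutatorSplitting X.val T) (W : Sym n) :
    W.val = (hT.commutingPart W).val + ⁅⁅T W.val, X.val⁆, X.val⁆ := by
  simp [commutingPart]

lemma commute_commutingPart (hT : IsCommutatorSplitting X.val T) (W : Sym n) :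
    Commute (hT.commutingPart W).val X.val :=
  hT.commute_sub W.val

lemma ipM_curvature (hT : IsCommutatorSplitting X.val T) (hYX : Commute Y.val X.val)
    (V W : Sym n) : ipM (hT.curvature Y V) W =
      (⁅⁅T V.val, X.val⁆, Y.val⁆ * ⁅⁅T W.val, X.val⁆, X.val⁆).trace := by
  change (⁅⁅T V.val, X.val⁆, Y.val⁆ * W.val).trace = _
  nth_rw 1 [hT.coe_eq_commutingPart_add W]
  rw [mul_add, trace_add, trace_lie_lie_mul_eq_zero hYX (hT.commute_commutingPart W), zero_add]

lemma ipM_curvature_comm (hT : IsCommutatorSplitting X.val T) (hYX : Commute Y.val X.val)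
    (V W : Sym n) : ipM (hT.curvature Y V) W = ipM V (hT.curvature Y W) := by
  have hcomm : ipM V (hT.curvature Y W) = ipM (hT.curvature Y W) V := trace_mul_comm _ _
  rw [hcomm, hT.ipM_curvature hYX, hT.ipM_curvature hYX, trace_mul_comm,
    trace_lie_mul_lie_comm hYX.symm]

lemma trace_mul_lie_lie_generator (hT : IsCommutatorSplitting X.val T)
    (hYX : Commute Y.val X.val) (W : Sym n) :
    (Y.val * ⁅⁅T W.val, X.val⁆, ⁅⁅T W.val, X.val⁆, X.val⁆⁆).trace =
      -ipM (hT.curvature Y W) W := by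
  rw [hT.ipM_curvature hYX, trace_lie_mul_eq_neg, neg_neg]

variable {f : Sym n → EReal} {c : ℝ}

lemma ipM_curvature_le_subderiv2 (hT : IsCommutatorSplitting X.val T) (hf : OrthInvariant f)
    (hc : f X = (c : EReal)) (hY : Y ∈ convexSubdiff ipM f X) (W : Sym n) :
    ((ipM (hT.curvature Y W) W : ℝ) : EReal) ≤ subderiv2 ipM f X Y W := by
  set S := ⁅T W.val, X.val⁆
  have hS : (-S)ᵀ = - -S := by rw [transpose_neg, hT.transpose_generator]
  have hlinear : (Y.val * ⁅S, W.val⁆).trace = -ipM (hT.curvature Y W) W := by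
    rw [← neg_eq_iff_eq_neg, ← trace_lie_mul_eq_neg]
    rfl
  have hquad : (Y.val * ⁅S, ⁅S, X.val⁆⁆).trace = -ipM (hT.curvature Y W) W :=
    hT.trace_mul_lie_lie_generator (hf.commute_of_mem_convexSubdiff hc hY) W
  convert hf.coe_le_subderiv2 hc hY hS W using 2
  have hneg (A : Matrix (Fin n) (Fin n) ℝ) : ⁅-S, A⁆ = -⁅S, A⁆ := by
    rw [Ring.lie_def, Ring.lie_def, neg_mul, mul_neg, neg_sub_neg, neg_sub]
  have hneg_neg (A : Matrix (Fin n) (Fin n) ℝ) : ⁅-S, ⁅-S, A⁆⁆ = ⁅S, ⁅S, A⁆⁆ := by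
    simp only [Ring.lie_def]
    noncomm_ring
  rw [hneg_neg, hneg, mul_neg, trace_neg, hquad, hlinear]
  ring

lemma ipM_commutingPart (hT : IsCommutatorSplitting X.val T) (hYX : Commute Y.val X.val)
    (W : Sym n) : ipM Y (hT.commutingPart W) = ipM Y W := by
  rw [commutingPart, ipM_sub_right, sub_eq_self]
  exact trace_mul_lie_eq_zero_of_commute hYX _

lemma hasRecoveryCurve (hT : IsCommutatorSplitting X.val T) (hf : OrthInvariant f)
    (hc : f X = (c : EReal)) (hY : Y ∈ convexSubdiff ipM f X) {W : Sym n}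
    (haffine : ∀ᶠ t : ℝ in 𝓝[>] 0, f (X + t • hT.commutingPart W) =
      ((c + t * ipM Y (hT.commutingPart W) : ℝ) : EReal)) :
    HasRecoveryCurve ipM f X Y W (ipM (hT.curvature Y W) W : ℝ) := by
  have hYX := hf.commute_of_mem_convexSubdiff hc hY
  have hcross : (Y.val * ⁅⁅T W.val, X.val⁆, (hT.commutingPart W).val⁆).trace = 0 := by
    rw [← neg_eq_zero, ← trace_lie_mul_eq_neg,
      trace_lie_lie_mul_eq_zero hYX (hT.commute_commutingPart W)]
  convert hf.hasRecoveryCurve hc hY (hT.transpose_generator W) (hT.coe_eq_commutingPart_add W)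
    haffine using 2
  rw [hcross, hT.trace_mul_lie_lie_generator hYX]
  ring

end IsCommutatorSplitting

end Curvature

/-- Corollary 4.2: for a symmetric proper polyhedral convex `θ`, the spectral
function `g = θ ∘ λ` is generalized twice differentiable at `X` for any
`Y ∈ ri ∂g(X)`. -/
theorem polyhedral_gen_twice_diff {n : ℕ} (θ : (Fin n → ℝ) → EReal) (X Y : Sym n)
    (hsym : SymmetricFn θ)
    (hproper : (∃ x : Fin n → ℝ, θ x ≠ ⊤) ∧ ∀ x : Fin n → ℝ, θ x ≠ ⊥)
    (hpoly : IsPolyhedral (ipProd ipV) (epiSet θ))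
    (hfin : IsFiniteAt θ (eigval X.val))
    (hY : Y ∈ relInterior (convexSubdiff ipM (specFn θ) X)) :
    GenTwiceDiff ipM (specFn θ) X Y := by
  obtain ⟨c, hc⟩ : ∃ c : ℝ, specFn θ X = c := ⟨_, (EReal.coe_toReal hfin.1 hfin.2).symm⟩
  obtain ⟨T, hT⟩ := exists_isCommutatorSplitting X.2
  have hinv := orthInvariant_specFn θ
  have hcomm {Y'} (hY' : Y' ∈ convexSubdiff ipM (specFn θ) X) : Commute Y'.val X.val :=
    hinv.commute_of_mem_convexSubdiff hc hY'
  refine genTwiceDiff_of_hasRecoveryCurve (B := traceForm n) hfin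
    (criticalSubspace (traceForm n) (convexSubdiff ipM (specFn θ) X) Y) (hT.curvature Y)
    (hT.ipM_curvature_comm (hcomm hY.1))
    (fun W _ => hT.ipM_curvature_le_subderiv2 hinv hc hY.1 W) (fun W hW => ?_)
    fun W hW => subderiv2_eq_top_of_notMem_criticalSubspace continuous_traceForm hfin hY hW
  have hcrit : ∀ Y' ∈ convexSubdiff ipM (specFn θ) X,
      ipM Y' (hT.commutingPart W) = ipM Y (hT.commutingPart W) := fun Y' hY' => by
    rw [hT.ipM_commutingPart (hcomm hY'), hT.ipM_commutingPart (hcomm hY.1)]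
    exact mem_criticalSubspace.mp hW Y' hY'
  exact hT.hasRecoveryCurve hinv hc hY.1
    (eventually_specFn_add_smul_eq hsym hpoly hc hY.1 (hT.commute_commutingPart W) hcrit)

end SpecPaper
end
end

section
/- Let θ : ℝⁿ → ℝ be symmetric, locally Lipschitz continuous around λ(X) and differentiable at λ(X), and let g = θ∘λ be the associated spectral function, so that g is differentiable at X with ∇g(X) = U·Diag(∇θ(λ(X)))·Uᵀ for any U ∈ Oⁿ(X). Then g is twice semidifferentiable at X if and only if θ is twice semidifferentiable at λ(X). Moreover, if either holds, then for every H ∈ Sⁿ, the second semiderivative satisfies d²g(X)(H) = d²θ(λ(X))(λ'(X;H)) + 2·∑_{m=1}^{r} ⟨Diag(y_{α_m}), U_{α_m}ᵀ·H·(μ_m·I − X)^†·H·U_{α_m}⟩ with y = ∇θ(λ(X)) and U ∈ Oⁿ(X), and d²g(X)(H) = d²g(X, ∇g(X))(H) for all H ∈ Sⁿ. -/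
open Filter Topology Matrix

noncomputable section

namespace SpecPaper

/-! ## Generic variational analysis definitions over a topological real vector space -/

variable {E : Type*}

/-!
In an eigenbasis of `X` the perturbation `X + tH` becomes `Λ + tH` with `Λ = Diag(λ(X))`. Two
skew-symmetric Sylvester solutions `K`, `L` for `Λ` make `S = 1 + tK + t²(K²/2 + L)` orthogonal up
to `O(t³)` and remove, up to `O(t³)`, the part of `SᵀΛS + tSᵀHS` coupling different eigenvalues.
What remains is block diagonal, and its blocks are scalar matrices plus `t` times a
block converging to the corresponding block of `H`; by Ostrowski's inequality the
eigenvalues change by `O(t³)` only. So `θ(λ(X + tH)) = θ(λ(X) + tw) + O(t³)` where `w → λ'(X;H)` as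
`t ↓ 0`, uniformly in `H`. As `y = ∇θ(λ(X))` is constant on the blocks, `⟨y, w⟩` is a trace, equal
to `⟨∇g(X), H⟩` plus `t/2` times the curvature term, so that the second-order quotients of `g` and
`θ` differ by the curvature term in the limit. Conversely, along `H = U Diag(w) Uᵀ` the two
quotients coincide.
-/

/-! ## Orthogonal diagonalizations -/

section OrthDiag

variable {ι κ : Type*} [Fintype ι] [DecidableEq ι] [Fintype κ] [DecidableEq κ]

/-- `P` orthogonally diagonalizes `M` with eigenvalues `d`, listed in an arbitrary order. In
particular `U ∈ eigOrth X` is the same as `OrthDiag X U (eigval X)`. -/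
structure OrthDiag (M P : Matrix ι ι ℝ) (d : ι → ℝ) : Prop where
  orth : P * Pᵀ = 1
  eq : M = P * diagonal d * Pᵀ

namespace OrthDiag

variable {A B P V : Matrix ι ι ℝ} {a b : ι → ℝ}

lemma transpose_mul_self (h : OrthDiag A P a) : Pᵀ * P = 1 :=
  mul_eq_one_comm.mp h.orth

lemma isSymm (h : OrthDiag A P a) : A.IsSymm := by
  rw [Matrix.IsSymm, h.eq]
  simp only [transpose_mul, transpose_transpose, diagonal_transpose, Matrix.mul_assoc]

lemma submatrix (h : OrthDiag A P a) (e f : κ ≃ ι) :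
    OrthDiag (A.submatrix e e) (P.submatrix e f) (a ∘ f) where
  orth := by
    rw [transpose_submatrix, submatrix_mul_equiv, h.orth, submatrix_one_equiv]
  eq := by
    rw [transpose_submatrix, ← submatrix_diagonal_equiv, submatrix_mul_equiv,
      submatrix_mul_equiv, ← h.eq]

lemma conj (h : OrthDiag A P a) (hV : V * Vᵀ = 1) : OrthDiag (V * A * Vᵀ) (V * P) a where
  orth := by
    rw [transpose_mul, Matrix.mul_assoc, ← Matrix.mul_assoc P, h.orth, Matrix.one_mul, hV]
  eq := by
    rw [transpose_mul, h.eq]; simp only [Matrix.mul_assoc]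

lemma add_smul (hA : OrthDiag A P a) (hB : OrthDiag B P b) (t : ℝ) :
    OrthDiag (A + t • B) P (a + t • b) where
  orth := hA.orth
  eq := by
    have hdiag : diagonal (a + t • b) = diagonal a + t • diagonal b := by
      rw [← diagonal_smul, diagonal_add]; rfl
    rw [hA.eq, hB.eq, hdiag, Matrix.mul_add, Matrix.add_mul, Matrix.mul_smul, Matrix.smul_mul]

lemma mul (hA : OrthDiag A P a) (hB : OrthDiag B P b) : OrthDiag (A * B) P (a * b) where
  orth := hA.orth
  eq := by
    calc A * B = P * diagonal a * (Pᵀ * P) * diagonal b * Pᵀ := by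
          rw [hA.eq, hB.eq]; simp only [Matrix.mul_assoc]
      _ = P * (diagonal a * diagonal b) * Pᵀ := by
          rw [hA.transpose_mul_self, Matrix.mul_one, Matrix.mul_assoc P]
      _ = P * diagonal (a * b) * Pᵀ := by rw [diagonal_mul_diagonal]; rfl

lemma smul_one_sub (h : OrthDiag A P a) (c : ℝ) : OrthDiag (c • 1 - A) P (fun i => c - a i) where
  orth := h.orth
  eq := by
    have hdiag : diagonal (fun i => c - a i) = c • (1 : Matrix ι ι ℝ) - diagonal a := by
      rw [smul_one_eq_diagonal, diagonal_sub]
    rw [hdiag, Matrix.mul_sub, Matrix.sub_mul, ← h.eq, Matrix.mul_smul, Matrix.mul_one,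
      Matrix.smul_mul, h.orth]

lemma trace_eq_sum (h : OrthDiag A P a) : A.trace = ∑ i, a i := by
  rw [h.eq, Matrix.mul_assoc, Matrix.trace_mul_comm, Matrix.mul_assoc, h.transpose_mul_self,
    Matrix.mul_one, trace_diagonal]

lemma dotProduct_mulVec_self (h : OrthDiag A P a) (x : ι → ℝ) :
    x ⬝ᵥ A *ᵥ x = ∑ i, a i * (Pᵀ *ᵥ x) i ^ 2 := by
  rw [h.eq, ← mulVec_mulVec, ← mulVec_mulVec, dotProduct_mulVec, ← mulVec_transpose]
  simp only [dotProduct, mulVec_diagonal]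
  exact Finset.sum_congr rfl fun i _ => by ring

lemma dotProduct_self (h : OrthDiag A P a) (x : ι → ℝ) :
    x ⬝ᵥ x = ∑ i, (Pᵀ *ᵥ x) i ^ 2 := by
  have hone : OrthDiag (1 : Matrix ι ι ℝ) P 1 := ⟨h.orth, by simp [h.orth]⟩
  simpa using hone.dotProduct_mulVec_self x

end OrthDiag

lemma exists_orthDiag_eigval {n : ℕ} {M : Matrix (Fin n) (Fin n) ℝ} (hM : M.IsSymm) :
    ∃ U, OrthDiag M U (eigval M) := by
  have hH : M.IsHermitian := by
    rwa [Matrix.IsHermitian, conjTranspose_eq_transpose_of_trivial]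
  set P : Matrix (Fin n) (Fin n) ℝ := hH.eigenvectorUnitary.val
  have hstar : star P = Pᵀ := by
    rw [star_eq_conjTranspose, conjTranspose_eq_transpose_of_trivial]
  have hP : OrthDiag M P hH.eigenvalues := by
    refine ⟨?_, ?_⟩
    · rw [← hstar]
      exact mem_unitaryGroup_iff.mp hH.eigenvectorUnitary.2
    · have hspec := hH.spectral_theorem
      rw [Unitary.conjStarAlgAut_apply] at hspec
      rw [← hstar]
      exact hspec
  have hsort : eigval M = hH.eigenvalues ∘ Tuple.sort fun j => -hH.eigenvalues j := by
    rw [eigval, dif_pos hH]; rfl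
  exact ⟨_, hsort ▸ hP.submatrix (Equiv.refl _) _⟩

lemma eigval_antitone {n : ℕ} (M : Matrix (Fin n) (Fin n) ℝ) : Antitone (eigval M) := by
  unfold eigval
  split_ifs with hM
  · intro i j hij
    simpa using Tuple.monotone_sort (fun j => -hM.eigenvalues j) hij
  · exact antitone_const

end OrthDiag

/-! ## Perturbation of ordered eigenvalues -/

section Perturbation

variable {ι : Type*} [Fintype ι] [LinearOrder ι] {A B P Q : Matrix ι ι ℝ} {a b : ι → ℝ}

lemma exists_ne_zero_mulVec_eq_zero_of_ne (M N : Matrix ι ι ℝ) (k : ι) :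
    ∃ x ≠ 0, (∀ i < k, (M *ᵥ x) i = 0) ∧ ∀ i > k, (N *ᵥ x) i = 0 := by
  let R : Matrix ι ι ℝ := of fun i => if i < k then M i else if k < i then N i else 0
  have hdet : R.det = 0 := det_eq_zero_of_row_eq_zero k fun j => by simp [R]
  obtain ⟨x, hx, hRx⟩ := exists_mulVec_eq_zero_iff.mpr hdet
  refine ⟨x, hx, fun i hi => ?_, fun i hi => ?_⟩
  · simpa [R, mulVec, hi] using congrFun hRx i
  · simpa [R, mulVec, hi, hi.not_gt] using congrFun hRx i

lemma OrthDiag.exists_ne_zero_dotProduct_le (hA : OrthDiag A P a) (hB : OrthDiag B Q b)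
    (ha : Antitone a) (hb : Antitone b) (S T : Matrix ι ι ℝ) (k : ι) :
    ∃ x ≠ 0, (T *ᵥ x) ⬝ᵥ A *ᵥ T *ᵥ x ≤ a k * ((T *ᵥ x) ⬝ᵥ T *ᵥ x) ∧
      b k * ((S *ᵥ x) ⬝ᵥ S *ᵥ x) ≤ (S *ᵥ x) ⬝ᵥ B *ᵥ S *ᵥ x := by
  obtain ⟨x, hx, hlow, hhigh⟩ := exists_ne_zero_mulVec_eq_zero_of_ne (Pᵀ * T) (Qᵀ * S) k
  simp only [← mulVec_mulVec] at hlow hhigh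
  refine ⟨x, hx, ?_, ?_⟩
  · rw [hA.dotProduct_mulVec_self, hA.dotProduct_self, Finset.mul_sum]
    refine Finset.sum_le_sum fun i _ => ?_
    rcases lt_or_ge i k with hik | hki
    · simp [hlow i hik]
    · exact mul_le_mul_of_nonneg_right (ha hki) (sq_nonneg _)
  · rw [hB.dotProduct_mulVec_self, hB.dotProduct_self, Finset.mul_sum]
    refine Finset.sum_le_sum fun i _ => ?_
    rcases le_or_gt i k with hik | hki
    · exact mul_le_mul_of_nonneg_right (hb hik) (sq_nonneg _)
    · simp [hhigh i hki]

open scoped Matrix.Norms.L2Operator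

lemma abs_dotProduct_mulVec_self_le {ι : Type*} [Fintype ι] [DecidableEq ι]
    (M : Matrix ι ι ℝ) (x : ι → ℝ) : |x ⬝ᵥ M *ᵥ x| ≤ ‖M‖ * (x ⬝ᵥ x) := by
  set v : EuclideanSpace ℝ ι := WithLp.toLp 2 x
  have hself : x ⬝ᵥ x = ‖v‖ * ‖v‖ := by
    rw [← real_inner_self_eq_norm_mul_norm, EuclideanSpace.inner_eq_star_dotProduct]
    simp [v]
  have hquad : x ⬝ᵥ M *ᵥ x = inner ℝ (WithLp.toLp 2 (M *ᵥ x) : EuclideanSpace ℝ ι) v := by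
    rw [EuclideanSpace.inner_eq_star_dotProduct]
    simp [v]
  calc |x ⬝ᵥ M *ᵥ x| ≤ ‖(WithLp.toLp 2 (M *ᵥ x) : EuclideanSpace ℝ ι)‖ * ‖v‖ :=
        hquad ▸ abs_real_inner_le_norm _ _
    _ ≤ ‖M‖ * ‖v‖ * ‖v‖ := mul_le_mul_of_nonneg_right (l2_opNorm_mulVec M v) (norm_nonneg _)
    _ = ‖M‖ * (x ⬝ᵥ x) := by rw [hself, mul_assoc]

-- Quantitative form of Ostrowski's theorem; it reduces to Weyl's inequality for `S = 1`.
lemma OrthDiag.abs_sub_le_norm_conj_sub (hA : OrthDiag A P a) (hB : OrthDiag B Q b)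
    (ha : Antitone a) (hb : Antitone b) (S : Matrix ι ι ℝ) (k : ι) :
    |a k - b k| ≤ ‖Sᵀ * B * S - A‖ + ‖Sᵀ * S - 1‖ * |b k| := by
  have hadj (x v : ι → ℝ) : x ⬝ᵥ Sᵀ *ᵥ v = (S *ᵥ x) ⬝ᵥ v := by
    rw [dotProduct_mulVec, vecMul_transpose]
  have hquad (x : ι → ℝ) :
      |(S *ᵥ x) ⬝ᵥ B *ᵥ S *ᵥ x - x ⬝ᵥ A *ᵥ x| ≤ ‖Sᵀ * B * S - A‖ * (x ⬝ᵥ x) := by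
    convert abs_dotProduct_mulVec_self_le (Sᵀ * B * S - A) x using 2
    rw [sub_mulVec, dotProduct_sub, Matrix.mul_assoc, ← mulVec_mulVec, hadj, mulVec_mulVec]
  have hself (x : ι → ℝ) :
      |b k * ((S *ᵥ x) ⬝ᵥ S *ᵥ x - x ⬝ᵥ x)| ≤ ‖Sᵀ * S - 1‖ * |b k| * (x ⬝ᵥ x) := by
    have h := abs_dotProduct_mulVec_self_le (Sᵀ * S - 1) x
    rw [sub_mulVec, dotProduct_sub, ← mulVec_mulVec, hadj, one_mulVec] at h
    rw [abs_mul]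
    linarith [mul_le_mul_of_nonneg_left h (abs_nonneg (b k))]
  have hpos {x : ι → ℝ} (hx : x ≠ 0) : 0 < x ⬝ᵥ x := by
    simpa using dotProduct_star_self_pos_iff.mpr hx
  refine abs_sub_le_iff.mpr ⟨?_, ?_⟩
  · obtain ⟨x, hx, hBx, hAx⟩ := hB.exists_ne_zero_dotProduct_le hA hb ha 1 S k
    simp only [one_mulVec] at hAx
    refine le_of_mul_le_mul_right ?_ (hpos hx)
    linarith [abs_le.mp (hquad x), abs_le.mp (hself x)]
  · obtain ⟨x, hx, hAx, hBx⟩ := hA.exists_ne_zero_dotProduct_le hB ha hb S 1 k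
    simp only [one_mulVec] at hAx
    refine le_of_mul_le_mul_right ?_ (hpos hx)
    linarith [abs_le.mp (hquad x), abs_le.mp (hself x)]

lemma OrthDiag.eq_of_antitone (h : OrthDiag A P a) (h' : OrthDiag A Q b)
    (ha : Antitone a) (hb : Antitone b) : a = b := by
  funext k
  simpa [sub_eq_zero] using h.abs_sub_le_norm_conj_sub h' ha hb 1 k

end Perturbation

section Eigval

variable {n : ℕ} {A B M P V : Matrix (Fin n) (Fin n) ℝ} {d : Fin n → ℝ}

lemma OrthDiag.exists_eigval_eq_comp (h : OrthDiag M P d) :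
    ∃ σ : Equiv.Perm (Fin n), eigval M = d ∘ σ := by
  let σ := Tuple.sort fun j => -d j
  have hσ : Antitone (d ∘ σ) := fun i j hij => by
    simpa using Tuple.monotone_sort (fun j => -d j) hij
  obtain ⟨U, hU⟩ := exists_orthDiag_eigval h.isSymm
  exact ⟨σ, hU.eq_of_antitone (h.submatrix (Equiv.refl _) σ) (eigval_antitone M) hσ⟩

lemma OrthDiag.symmetricFn_eigval {α : Type*} {θ : (Fin n → ℝ) → α} (hθ : SymmetricFn θ)
    (h : OrthDiag M P d) : θ (eigval M) = θ d := by
  obtain ⟨σ, hσ⟩ := h.exists_eigval_eq_comp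
  rw [hσ]
  exact hθ d σ

lemma eigval_conj (hM : M.IsSymm) (hV : V * Vᵀ = 1) : eigval (V * M * Vᵀ) = eigval M := by
  obtain ⟨U, hU⟩ := exists_orthDiag_eigval hM
  obtain ⟨W, hW⟩ := exists_orthDiag_eigval (hU.conj hV).isSymm
  exact hW.eq_of_antitone (hU.conj hV) (eigval_antitone _) (eigval_antitone _)

open scoped Matrix.Norms.L2Operator in
lemma abs_eigval_sub_le_norm_conj_sub (hA : A.IsSymm) (hB : B.IsSymm)
    (S : Matrix (Fin n) (Fin n) ℝ) (k : Fin n) :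
    |eigval A k - eigval B k| ≤ ‖Sᵀ * B * S - A‖ + ‖Sᵀ * S - 1‖ * |eigval B k| := by
  obtain ⟨U, hU⟩ := exists_orthDiag_eigval hA
  obtain ⟨W, hW⟩ := exists_orthDiag_eigval hB
  exact hU.abs_sub_le_norm_conj_sub hW (eigval_antitone A) (eigval_antitone B) S k

open scoped Matrix.Norms.L2Operator in
lemma lipschitzOnWith_eigval :
    LipschitzOnWith 1 (eigval (n := n)) {M | M.IsSymm} := by
  refine LipschitzOnWith.of_dist_le_mul fun A hA B hB => ?_
  rw [NNReal.coe_one, one_mul, dist_pi_le_iff dist_nonneg]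
  intro k
  rw [Real.dist_eq, dist_eq_norm_sub']
  simpa using abs_eigval_sub_le_norm_conj_sub hA hB 1 k

lemma continuousOn_eigval : ContinuousOn (eigval (n := n)) {M | M.IsSymm} := by
  open scoped Matrix.Norms.L2Operator in exact lipschitzOnWith_eigval.continuousOn

open scoped Matrix.Norms.L2Operator in
lemma isBigO_eigval_sub {α : Type*} {l : Filter α} {A B S : α → Matrix (Fin n) (Fin n) ℝ}
    {r : α → ℝ} (hA : ∀ p, (A p).IsSymm) (hB : ∀ p, (B p).IsSymm)
    (hconj : (fun p => (S p)ᵀ * B p * S p - A p) =O[l] r)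
    (horth : (fun p => (S p)ᵀ * S p - 1) =O[l] r)
    (hbdd : (fun p => eigval (B p)) =O[l] fun _ => (1 : ℝ)) :
    (fun p => eigval (A p) - eigval (B p)) =O[l] r := by
  refine Asymptotics.isBigO_pi.mpr fun k => ?_
  have hprod := horth.norm_left.mul (Asymptotics.isBigO_pi.mp hbdd k).norm_left
  simp only [mul_one] at hprod
  refine (Asymptotics.IsBigO.of_norm_le fun p => ?_).trans (hconj.norm_left.add hprod)
  exact abs_eigval_sub_le_norm_conj_sub (hA p) (hB p) (S p) k

end Eigval

/-! ## Blockwise eigenvalues -/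

section Block

variable {n : ℕ} (X : Matrix (Fin n) (Fin n) ℝ)

/-- The eigenvalues of the diagonal blocks of `M`, where the blocks group the indices with equal
eigenvalue of `X`; thus `lambdaDir X U H = blockEigval X (Uᵀ * H * U)`. -/
def blockEigval (M : Matrix (Fin n) (Fin n) ℝ) : Fin n → ℝ :=
  fun i => eigval (blockMat X M i) (blockIdx X i)

variable {X}

lemma mem_blockSet {i j : Fin n} : j ∈ blockSet X i ↔ eigval X j = eigval X i := by
  simp [blockSet]

lemma blockEmb_blockIdx (i : Fin n) : blockEmb X i (blockIdx X i) = i :=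
  congrArg Subtype.val (((blockSet X i).orderIsoOfFin rfl).apply_symm_apply _)

lemma isSymm_blockMat {M : Matrix (Fin n) (Fin n) ℝ} (hM : M.IsSymm) (i : Fin n) :
    (blockMat X M i).IsSymm :=
  hM.submatrix (blockEmb X i)

lemma continuous_blockEigval {α : Type*} [TopologicalSpace α]
    {f : α → Matrix (Fin n) (Fin n) ℝ} (hf : Continuous f) (hsymm : ∀ p, (f p).IsSymm) :
    Continuous fun p => blockEigval X (f p) := by
  refine continuous_pi fun i => (continuous_apply _).comp ?_
  exact continuousOn_eigval.comp_continuous (hf.matrix_submatrix (blockEmb X i) (blockEmb X i))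
    fun p => isSymm_blockMat (hsymm p) i

variable (X) in
/-- The index type of the blocks of `X`. -/
abbrev Block : Type := {s : Finset (Fin n) // ∃ i, blockSet X i = s}

lemma blockSet_eq_of_mem {s : Block X} {i : Fin n} (hi : i ∈ s.1) : blockSet X i = s.1 := by
  obtain ⟨_, j, rfl⟩ := s
  simp only [blockSet, mem_blockSet.mp hi]

variable (X) in
/-- The partition of the indices into the blocks of `X`, each enumerated increasingly. -/
def blockEquiv : (Σ s : Block X, Fin s.1.card) ≃ Fin n :=
  Equiv.ofBijective (fun p => p.1.1.orderIsoOfFin rfl p.2) <| by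
    refine ⟨?_, fun i => ⟨⟨⟨blockSet X i, i, rfl⟩, blockIdx X i⟩,
      blockEmb_blockIdx i⟩⟩
    rintro ⟨s, a⟩ ⟨t, b⟩ hab
    have hst : s = t := Subtype.ext <| by
      rw [← blockSet_eq_of_mem (s.1.orderIsoOfFin rfl a).2]
      exact (congrArg _ hab).trans (blockSet_eq_of_mem (t.1.orderIsoOfFin rfl b).2)
    subst hst
    exact congrArg _ ((s.1.orderIsoOfFin rfl).injective (Subtype.ext hab))

lemma blockEquiv_symm_apply (i : Fin n) :
    (blockEquiv X).symm i = ⟨⟨blockSet X i, i, rfl⟩, blockIdx X i⟩ := by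
  rw [Equiv.symm_apply_eq]
  exact (blockEmb_blockIdx i).symm

lemma eigval_blockEquiv_eq_iff (p q : Σ s : Block X, Fin s.1.card) :
    eigval X (blockEquiv X p) = eigval X (blockEquiv X q) ↔ p.1 = q.1 := by
  have hblock (p : Σ s : Block X, Fin s.1.card) : blockSet X (blockEquiv X p) = p.1.1 :=
    blockSet_eq_of_mem (p.1.1.orderIsoOfFin rfl p.2).2
  rw [← mem_blockSet, hblock, Subtype.ext_iff, ← hblock p]
  refine ⟨fun h => blockSet_eq_of_mem h, fun h => ?_⟩
  rw [← h]
  exact mem_blockSet_self X _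

end Block

section BlockDiagonal

variable {o : Type*} {m : o → Type*} [Fintype o] [DecidableEq o] [∀ s, Fintype (m s)]
  [∀ s, DecidableEq (m s)]

lemma OrthDiag.blockDiagonal' {M P : ∀ s, Matrix (m s) (m s) ℝ} {d : ∀ s, m s → ℝ}
    (h : ∀ s, OrthDiag (M s) (P s) (d s)) :
    OrthDiag (Matrix.blockDiagonal' M) (Matrix.blockDiagonal' P) (fun p => d p.1 p.2) where
  orth := by
    rw [blockDiagonal'_transpose, ← blockDiagonal'_mul, ← blockDiagonal'_one]
    exact congrArg _ (funext fun s => (h s).orth)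
  eq := by
    rw [blockDiagonal'_transpose, ← blockDiagonal'_diagonal, ← blockDiagonal'_mul,
      ← blockDiagonal'_mul]
    exact congrArg _ (funext fun s => (h s).eq)

end BlockDiagonal

section BlockDecomposition

variable {n : ℕ} {X : Matrix (Fin n) (Fin n) ℝ}

lemma submatrix_blockDiagonal'_blockEquiv {M : Matrix (Fin n) (Fin n) ℝ}
    (hoff : ∀ i j, eigval X i ≠ eigval X j → M i j = 0) :
    (Matrix.blockDiagonal' fun s : Block X => M.submatrix (fun a => blockEquiv X ⟨s, a⟩)
      fun a => blockEquiv X ⟨s, a⟩).submatrix (blockEquiv X).symm (blockEquiv X).symm = M := by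
  ext i j
  obtain ⟨⟨s, a⟩, rfl⟩ := (blockEquiv X).surjective i
  obtain ⟨⟨t, b⟩, rfl⟩ := (blockEquiv X).surjective j
  simp only [submatrix_apply, Equiv.symm_apply_apply]
  by_cases hst : s = t
  · subst hst
    rw [blockDiagonal'_apply_eq, submatrix_apply]
  · rw [blockDiagonal'_apply_ne _ _ _ hst, hoff]
    rwa [Ne, eigval_blockEquiv_eq_iff]

lemma exists_orthDiag_blockEigval {G : Matrix (Fin n) (Fin n) ℝ} (hG : G.IsSymm)
    (hoff : ∀ i j, eigval X i ≠ eigval X j → G i j = 0) :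
    ∃ V, OrthDiag G V (blockEigval X G) ∧ ∀ i j, eigval X i ≠ eigval X j → V i j = 0 := by
  let e := blockEquiv X
  choose W hW using fun s => exists_orthDiag_eigval (hG.submatrix fun a => e ⟨s, a⟩)
  have hblock : blockEigval X G =
      (fun p => eigval (G.submatrix (fun a => e ⟨p.1, a⟩) fun a => e ⟨p.1, a⟩) p.2) ∘ e.symm := by
    funext i
    rw [Function.comp_apply, blockEquiv_symm_apply]
    rfl
  refine ⟨(Matrix.blockDiagonal' W).submatrix e.symm e.symm, ?_, fun i j hij => ?_⟩
  · rw [hblock]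
    convert (OrthDiag.blockDiagonal' hW).submatrix e.symm e.symm
    exact (submatrix_blockDiagonal'_blockEquiv hoff).symm
  · obtain ⟨⟨s, a⟩, rfl⟩ := e.surjective i
    obtain ⟨⟨t, b⟩, rfl⟩ := e.surjective j
    rw [submatrix_apply, e.symm_apply_apply, e.symm_apply_apply]
    exact blockDiagonal'_apply_ne W a b (mt (eigval_blockEquiv_eq_iff ⟨s, a⟩ ⟨t, b⟩).mpr hij)

lemma OrthDiag.diagonal_of_forall_eq {ι : Type*} [Fintype ι] [DecidableEq ι]
    {V : Matrix ι ι ℝ} {z : ι → ℝ} (hV : V * Vᵀ = 1) (hz : ∀ i j, V i j ≠ 0 → z i = z j) :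
    OrthDiag (diagonal z) V z where
  orth := hV
  eq := by
    have hcomm : V * diagonal z = diagonal z * V := by
      ext i j
      rw [mul_diagonal, diagonal_mul, mul_comm]
      by_cases hij : V i j = 0
      · simp [hij]
      · rw [hz i j hij]
    rw [hcomm, Matrix.mul_assoc, hV, Matrix.mul_one]

variable {G : Matrix (Fin n) (Fin n) ℝ}

lemma SymmetricFn.apply_eigval_diagonal_add_smul {α : Type*} {θ : (Fin n → ℝ) → α}
    (hθ : SymmetricFn θ) (hG : G.IsSymm) (hoff : ∀ i j, eigval X i ≠ eigval X j → G i j = 0)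
    (t : ℝ) :
    θ (eigval (diagonal (eigval X) + t • G)) = θ (eigval X + t • blockEigval X G) := by
  obtain ⟨V, hV, hVoff⟩ := exists_orthDiag_blockEigval hG hoff
  have hdiag : OrthDiag (diagonal (eigval X)) V (eigval X) :=
    .diagonal_of_forall_eq hV.orth fun i j => not_imp_comm.mp (hVoff i j)
  exact (hdiag.add_smul hV t).symmetricFn_eigval hθ

lemma ipV_blockEigval {y : Fin n → ℝ} (hy : ∀ i j, eigval X i = eigval X j → y i = y j)
    (hG : G.IsSymm) (hoff : ∀ i j, eigval X i ≠ eigval X j → G i j = 0) :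
    ipV y (blockEigval X G) = ∑ i, y i * G i i := by
  obtain ⟨V, hV, hVoff⟩ := exists_orthDiag_blockEigval hG hoff
  have hdiag : OrthDiag (diagonal y) V y :=
    .diagonal_of_forall_eq hV.orth fun i j hij => hy i j (not_imp_comm.mp (hVoff i j) hij)
  calc ipV y (blockEigval X G) = (diagonal y * G).trace := (hdiag.mul hV).trace_eq_sum.symm
    _ = ∑ i, y i * G i i := by simp [trace, diagonal_mul]

end BlockDecomposition

/-! ## Second-order block diagonalization -/

section NearRotation

variable {𝔸 : Type*} [Ring 𝔸] [Algebra ℝ 𝔸]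

/-- The second-order Taylor polynomial of `t ↦ exp (t • K + t² • L)`. -/
def nearRotation (K L : 𝔸) (t : ℝ) : 𝔸 :=
  1 + t • K + t ^ 2 • ((1 / 2 : ℝ) • (K * K) + L)

/-- The coefficient of `t³` left over when `Λ + t • H` is conjugated by `nearRotation K L t`. -/
def conjRemainder (Λ H K L : 𝔸) (t : ℝ) : 𝔸 :=
  let M := (1 / 2 : ℝ) • (K * K) + L
  let N := (1 / 2 : ℝ) • (K * K) - L
  N * Λ * K - K * Λ * M + N * H + H * M - K * H * K +
    t • (N * Λ * M - K * H * M + N * H * K) + t ^ 2 • (N * H * M)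

lemma nearRotation_conj (Λ H K L : 𝔸) (t : ℝ) :
    nearRotation (-K) (-L) t * (Λ + t • H) * nearRotation K L t =
      Λ + t • (H + ⁅Λ, K⁆) + t ^ 2 • ((1 / 2 : ℝ) • ⁅⁅Λ, K⁆, K⁆ + ⁅H, K⁆ + ⁅Λ, L⁆) +
        t ^ 3 • conjRemainder Λ H K L t := by
  simp only [nearRotation, conjRemainder, Ring.lie_def, mul_add, add_mul, mul_sub, sub_mul,
    neg_mul, mul_neg, neg_neg, smul_mul_assoc, mul_smul_comm, one_mul, mul_one, mul_assoc]
  module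

lemma nearRotation_neg_mul_self (K L : 𝔸) (t : ℝ) :
    nearRotation (-K) (-L) t * nearRotation K L t = 1 + t ^ 3 • conjRemainder 1 0 K L t := by
  simpa [Ring.lie_def] using nearRotation_conj 1 0 K L t

lemma continuous_conjRemainder [TopologicalSpace 𝔸] [IsTopologicalRing 𝔸] [ContinuousSMul ℝ 𝔸]
    {α : Type*} [TopologicalSpace α] {Λ H K L : α → 𝔸} {t : α → ℝ} (hΛ : Continuous Λ)
    (hH : Continuous H) (hK : Continuous K) (hL : Continuous L) (ht : Continuous t) :
    Continuous fun p => conjRemainder (Λ p) (H p) (K p) (L p) (t p) := by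
  unfold conjRemainder
  fun_prop

end NearRotation

section BlockModel

variable {ι : Type*} (l : ι → ℝ)

open scoped Classical in
/-- The part of `M` that commutes with `diagonal l`: the entries `M i j` with `l i = l j`. -/
def blockPart (M : Matrix ι ι ℝ) : Matrix ι ι ℝ :=
  of fun i j => if l i = l j then M i j else 0

/-- The solution `K` of the Sylvester equation `⁅diagonal l, K⁆ = blockPart l M - M` whose block
part vanishes; the entries with `l i = l j` are `0` because `0⁻¹ = 0`. -/
def sylvesterSol (M : Matrix ι ι ℝ) : Matrix ι ι ℝ :=
  of fun i j => (l j - l i)⁻¹ * M i j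

lemma blockPart_add_smul (M N : Matrix ι ι ℝ) (t : ℝ) :
    blockPart l (M + t • N) = blockPart l M + t • blockPart l N := by
  ext i j
  by_cases h : l i = l j <;> simp [blockPart, h]

variable {l} {H M : Matrix ι ι ℝ}

lemma isSymm_blockPart (hM : M.IsSymm) : (blockPart l M).IsSymm := by
  ext i j
  simp only [transpose_apply, blockPart, of_apply, hM.apply, eq_comm]

lemma transpose_sylvesterSol (hM : M.IsSymm) : (sylvesterSol l M)ᵀ = -sylvesterSol l M := by
  ext i j
  simp only [transpose_apply, sylvesterSol, of_apply, Matrix.neg_apply, hM.apply, ← neg_mul,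
    ← inv_neg, neg_sub]

lemma continuous_blockPart : Continuous (blockPart l) :=
  continuous_matrix fun i j => by
    by_cases h : l i = l j <;> simp only [blockPart, of_apply, h, if_true, if_false] <;> fun_prop

lemma continuous_sylvesterSol : Continuous (sylvesterSol l) :=
  continuous_matrix fun i j => by simp only [sylvesterSol, of_apply]; fun_prop

variable [Fintype ι]

variable (l) in
/-- The coefficient of `t²` after conjugating `diagonal l + t • H` by the rotation
`exp (t • sylvesterSol l H)`. -/
def secondOrderTerm (H : Matrix ι ι ℝ) : Matrix ι ι ℝ :=
  (1 / 2 : ℝ) • ⁅blockPart l H + H, sylvesterSol l H⁆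

variable (l) in
/-- `diagonal l + t • blockModel l t H` is the block diagonal matrix orthogonally equivalent to
`diagonal l + t • H` up to an error of order `t³`. -/
def blockModel (t : ℝ) (H : Matrix ι ι ℝ) : Matrix ι ι ℝ :=
  blockPart l (H + t • secondOrderTerm l H)

lemma isSymm_secondOrderTerm (hH : H.IsSymm) : (secondOrderTerm l H).IsSymm := by
  have hsum : (blockPart l H + H)ᵀ = blockPart l H + H := (isSymm_blockPart hH).add hH
  rw [Matrix.IsSymm, secondOrderTerm, transpose_smul, Ring.lie_def, transpose_sub, transpose_mul,
    transpose_mul, transpose_sylvesterSol hH, hsum, Matrix.neg_mul, Matrix.mul_neg]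
  congr 1
  abel

lemma isSymm_blockModel (hH : H.IsSymm) (t : ℝ) : (blockModel l t H).IsSymm :=
  isSymm_blockPart (hH.add ((isSymm_secondOrderTerm hH).smul t))

lemma blockModel_apply_of_ne {t : ℝ} {i j : ι} (hij : l i ≠ l j) : blockModel l t H i j = 0 :=
  if_neg hij

lemma blockModel_apply_self (H : Matrix ι ι ℝ) (t : ℝ) (i : ι) :
    blockModel l t H i i = H i i + t * secondOrderTerm l H i i := by
  simp [blockModel, blockPart]

lemma secondOrderTerm_apply_self (H : Matrix ι ι ℝ) (i : ι) :
    secondOrderTerm l H i i = ∑ k, (l i - l k)⁻¹ * (H i k * H k i) := by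
  simp only [secondOrderTerm, Ring.lie_def, Matrix.smul_apply, Matrix.sub_apply, mul_apply,
    ← Finset.sum_sub_distrib, smul_eq_mul, Finset.mul_sum]
  refine Finset.sum_congr rfl fun k _ => ?_
  have hskew : (l k - l i)⁻¹ = -(l i - l k)⁻¹ := by rw [← inv_neg, neg_sub]
  by_cases h : l i = l k
  · simp [sylvesterSol, h]
  · simp only [blockPart, sylvesterSol, Matrix.add_apply, of_apply, if_neg h, if_neg (Ne.symm h),
      hskew]
    ring

lemma continuous_secondOrderTerm : Continuous (secondOrderTerm l) := by
  unfold secondOrderTerm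
  simp only [Ring.lie_def]
  have := continuous_blockPart (l := l)
  have := continuous_sylvesterSol (l := l)
  fun_prop

lemma continuous_blockModel : Continuous fun p : ℝ × Matrix ι ι ℝ => blockModel l p.1 p.2 := by
  have := continuous_secondOrderTerm (l := l)
  exact continuous_blockPart.comp (by fun_prop)

variable [DecidableEq ι]

variable (l) in
/-- The rotation that brings `diagonal l + t • H` to block diagonal form up to order `t³`. -/
def blockRotation (t : ℝ) (H : Matrix ι ι ℝ) : Matrix ι ι ℝ :=
  nearRotation (sylvesterSol l H) (sylvesterSol l (secondOrderTerm l H)) t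

lemma lie_diagonal_sylvesterSol (M : Matrix ι ι ℝ) :
    ⁅diagonal l, sylvesterSol l M⁆ = blockPart l M - M := by
  ext i j
  rw [Ring.lie_def, Matrix.sub_apply, diagonal_mul, mul_diagonal]
  by_cases h : l i = l j
  · simp [blockPart, sylvesterSol, h]
  · have hne : l j - l i ≠ 0 := sub_ne_zero.mpr (Ne.symm h)
    simp only [sylvesterSol, blockPart, of_apply, if_neg h, Matrix.sub_apply, zero_sub]
    field_simp
    ring

lemma transpose_blockRotation (hH : H.IsSymm) (t : ℝ) :
    (blockRotation l t H)ᵀ =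
      nearRotation (-sylvesterSol l H) (-sylvesterSol l (secondOrderTerm l H)) t := by
  simp only [blockRotation, nearRotation, transpose_add, transpose_one, transpose_smul,
    transpose_mul, transpose_sylvesterSol hH, transpose_sylvesterSol (isSymm_secondOrderTerm hH)]

lemma blockRotation_conj (hH : H.IsSymm) (t : ℝ) :
    (blockRotation l t H)ᵀ * (diagonal l + t • H) * blockRotation l t H =
      diagonal l + t • blockModel l t H + t ^ 3 • conjRemainder (diagonal l) H
        (sylvesterSol l H) (sylvesterSol l (secondOrderTerm l H)) t := by
  have hsecond : (1 / 2 : ℝ) • ⁅blockPart l H - H, sylvesterSol l H⁆ + ⁅H, sylvesterSol l H⁆ =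
      secondOrderTerm l H := by
    simp only [secondOrderTerm, Ring.lie_def, sub_mul, mul_sub, add_mul, mul_add]
    module
  rw [transpose_blockRotation hH, blockRotation, nearRotation_conj, lie_diagonal_sylvesterSol,
    lie_diagonal_sylvesterSol, hsecond, blockModel, blockPart_add_smul]
  module

lemma blockRotation_transpose_mul_self (hH : H.IsSymm) (t : ℝ) :
    (blockRotation l t H)ᵀ * blockRotation l t H =
      1 + t ^ 3 • conjRemainder 1 0 (sylvesterSol l H)
        (sylvesterSol l (secondOrderTerm l H)) t := by
  rw [transpose_blockRotation hH, blockRotation, nearRotation_neg_mul_self]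

end BlockModel

/-! ## The Moore–Penrose inverse and the curvature term -/

section MoorePenrose

/-- The four Penrose equations characterizing the pseudoinverse `B` of `A`. -/
structure IsMoorePenrose {ι : Type*} [Fintype ι] (A B : Matrix ι ι ℝ) : Prop where
  mul_mul_left : A * B * A = A
  mul_mul_right : B * A * B = B
  isSymm_left : (A * B).IsSymm
  isSymm_right : (B * A).IsSymm

lemma IsMoorePenrose.unique {ι : Type*} [Fintype ι] {A B C : Matrix ι ι ℝ}
    (hB : IsMoorePenrose A B) (hC : IsMoorePenrose A C) : B = C := by
  have hAB : A * B = A * C := by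
    calc A * B = ((A * C) * (A * B))ᵀ := by
          rw [← Matrix.mul_assoc, hC.mul_mul_left, hB.isSymm_left.eq]
      _ = A * B * (A * C) := by rw [transpose_mul, hB.isSymm_left.eq, hC.isSymm_left.eq]
      _ = A * C := by rw [← Matrix.mul_assoc, hB.mul_mul_left]
  have hBA : B * A = C * A := by
    calc B * A = ((B * A) * (C * A))ᵀ := by
          rw [Matrix.mul_assoc B, ← Matrix.mul_assoc A, hC.mul_mul_left, hB.isSymm_right.eq]
      _ = C * A * (B * A) := by rw [transpose_mul, hB.isSymm_right.eq, hC.isSymm_right.eq]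
      _ = C * A := by rw [Matrix.mul_assoc C, ← Matrix.mul_assoc A, hB.mul_mul_left]
  calc B = B * A * B := hB.mul_mul_right.symm
    _ = C * A * C := by rw [hBA, Matrix.mul_assoc, hAB, Matrix.mul_assoc]
    _ = C := hC.mul_mul_right

lemma IsMoorePenrose.pinv_eq {n : ℕ} {A B : Matrix (Fin n) (Fin n) ℝ} (h : IsMoorePenrose A B) :
    pinv A = B := by
  have hex : ∃ B, A * B * A = A ∧ B * A * B = B ∧ (A * B)ᵀ = A * B ∧ (B * A)ᵀ = B * A :=
    ⟨B, h.1, h.2, h.3, h.4⟩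
  obtain ⟨h₁, h₂, h₃, h₄⟩ := hex.choose_spec
  rw [pinv, dif_pos hex]
  exact IsMoorePenrose.unique ⟨h₁, h₂, h₃, h₄⟩ h

lemma OrthDiag.isMoorePenrose {ι : Type*} [Fintype ι] [DecidableEq ι] {A B P : Matrix ι ι ℝ}
    {a : ι → ℝ} (hA : OrthDiag A P a) (hB : OrthDiag B P a⁻¹) : IsMoorePenrose A B where
  mul_mul_left := by
    have ha : a * a⁻¹ * a = a := funext fun i => mul_inv_mul_cancel (a i)
    rw [((hA.mul hB).mul hA).eq, ha, ← hA.eq]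
  mul_mul_right := by
    have ha : a⁻¹ * a * a⁻¹ = a⁻¹ := funext fun i => by
      simpa only [inv_inv, Pi.mul_apply, Pi.inv_apply] using mul_inv_mul_cancel (a i)⁻¹
    rw [((hB.mul hA).mul hB).eq, ha, ← hB.eq]
  isSymm_left := (hA.mul hB).isSymm
  isSymm_right := (hB.mul hA).isSymm

variable {n : ℕ} {A P X U : Matrix (Fin n) (Fin n) ℝ} {a : Fin n → ℝ}

lemma OrthDiag.pinv_eq (h : OrthDiag A P a) : pinv A = P * diagonal a⁻¹ * Pᵀ :=
  (h.isMoorePenrose ⟨h.orth, rfl⟩).pinv_eq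

lemma OrthDiag.curvTerm_eq (h : OrthDiag X U (eigval X)) (H : Matrix (Fin n) (Fin n) ℝ)
    (y : Fin n → ℝ) :
    curvTerm X U H y = 2 * ∑ i, y i * secondOrderTerm (eigval X) (Uᵀ * H * U) i i := by
  rw [curvTerm]
  congr! 3 with i
  rw [(h.smul_one_sub _).pinv_eq, secondOrderTerm_apply_self]
  set D := diagonal (fun k => eigval X i - eigval X k)⁻¹
  calc (Uᵀ * (H * (U * D * Uᵀ) * H) * U) i i = ((Uᵀ * H * U) * D * (Uᵀ * H * U)) i i := by
        simp only [Matrix.mul_assoc]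
    _ = ∑ k, (eigval X i - eigval X k)⁻¹ * ((Uᵀ * H * U) i k * (Uᵀ * H * U) k i) := by
        rw [mul_apply]
        simp only [D, mul_diagonal, Pi.inv_apply]
        exact Finset.sum_congr rfl fun k _ => by ring

end MoorePenrose

/-! ## Second-order difference quotients of differentiable functions -/

section DifferenceQuotient

/-- The filter `t ↓ 0`, `w' → w` along which all (second) semiderivatives in direction `w` are
taken. -/
abbrev dirFilter {E : Type*} [TopologicalSpace E] (w : E) : Filter (ℝ × E) :=
  𝓝[>] (0 : ℝ) ×ˢ 𝓝 w

lemma dirFilter_le_nhds {E : Type*} [TopologicalSpace E] (w : E) :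
    dirFilter w ≤ 𝓝 ((0 : ℝ), w) := by
  rw [nhds_prod_eq]
  exact prod_mono nhdsWithin_le_nhds le_rfl

lemma eventually_dirFilter_pos {E : Type*} [TopologicalSpace E] (w : E) :
    ∀ᶠ p in dirFilter w, 0 < p.1 :=
  tendsto_fst.eventually self_mem_nhdsWithin

variable {E : Type*} [AddCommGroup E] [Module ℝ E] [TopologicalSpace E]

/-- The properties of an inner product, given as a bare function `ip` on a topological vector
space, on which first-order calculus with `nrm ip` relies. -/
structure IsContinuousInner (ip : E → E → ℝ) : Prop where
  smul_left (t : ℝ) (v w : E) : ip (t • v) w = t * ip v w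
  smul_right (v : E) (t : ℝ) (w : E) : ip v (t • w) = t * ip v w
  pos_of_ne_zero {w : E} : w ≠ 0 → 0 < ip w w
  continuous : Continuous fun p : E × E => ip p.1 p.2

namespace IsContinuousInner

variable {ip : E → E → ℝ}

lemma zero_right (hip : IsContinuousInner ip) (v : E) : ip v 0 = 0 := by
  simpa only [zero_smul, zero_mul] using hip.smul_right v 0 0

lemma continuous_nrm (hip : IsContinuousInner ip) : Continuous (nrm ip) :=
  Real.continuous_sqrt.comp (hip.continuous.comp (continuous_id.prodMk continuous_id))

lemma nrm_smul (hip : IsContinuousInner ip) {t : ℝ} (ht : 0 ≤ t) (w : E) :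
    nrm ip (t • w) = t * nrm ip w := by
  rw [nrm, hip.smul_left, hip.smul_right, ← mul_assoc, Real.sqrt_mul (mul_self_nonneg t),
    Real.sqrt_mul_self ht, nrm]

lemma nrm_pos (hip : IsContinuousInner ip) {w : E} (hw : w ≠ 0) : 0 < nrm ip w :=
  Real.sqrt_pos.2 (hip.pos_of_ne_zero hw)

end IsContinuousInner

/-- The second-order difference quotient of `f` at `x` with first-order term `ip g`, as a function
of the pair `(t, w)`. -/
def gradQuot2 (ip : E → E → ℝ) (f : E → ℝ) (x g : E) (p : ℝ × E) : ℝ :=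
  2 / p.1 ^ 2 * (f (x + p.1 • p.2) - f x - p.1 * ip g p.2)

namespace HasGradAt

variable [ContinuousAdd E] [ContinuousSMul ℝ E] {ip : E → E → ℝ} {f : E → ℝ} {x g : E}

lemma tendsto_diffQuot (hip : IsContinuousInner ip) (h : HasGradAt ip f x g) (w : E) :
    Tendsto (fun p : ℝ × E => p.1⁻¹ * (f (x + p.1 • p.2) - f x)) (dirFilter w) (𝓝 (ip g w)) := by
  set φ : E → ℝ := fun y => (nrm ip (y - x))⁻¹ * (f y - f x - ip g (y - x)) with hφ
  have hφx : φ x = 0 := by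
    simp only [hφ, sub_self, hip.zero_right, mul_zero]
  have hφ_tendsto : Tendsto φ (𝓝 x) (𝓝 0) := by
    have : ContinuousAt φ x := continuousAt_iff_punctured_nhds.2 (hφx.symm ▸ h)
    simpa only [ContinuousAt, hφx] using this
  have hpoint : Tendsto (fun p : ℝ × E => x + p.1 • p.2) (dirFilter w) (𝓝 x) := by
    have hcont : Continuous fun p : ℝ × E => x + p.1 • p.2 := by fun_prop
    simpa only [zero_smul, add_zero] using
      (hcont.tendsto ((0 : ℝ), w)).mono_left (dirFilter_le_nhds w)
  have hnrm : Tendsto (fun p : ℝ × E => nrm ip p.2) (dirFilter w) (𝓝 (nrm ip w)) :=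
    (hip.continuous_nrm.tendsto w).comp tendsto_snd
  have hlin : Tendsto (fun p : ℝ × E => ip g p.2) (dirFilter w) (𝓝 (ip g w)) :=
    ((hip.continuous.comp (continuous_const.prodMk continuous_id)).tendsto w).comp tendsto_snd
  have hlim := ((hφ_tendsto.comp hpoint).mul hnrm).add hlin
  rw [zero_mul, zero_add] at hlim
  refine hlim.congr' ?_
  filter_upwards [eventually_dirFilter_pos w] with p hp
  simp only [Function.comp_apply, hφ, add_sub_cancel_left, hip.smul_right, hip.nrm_smul hp.le]
  rcases eq_or_ne p.2 0 with hw | hw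
  · simp only [hw, smul_zero, add_zero, hip.zero_right, sub_self, mul_zero, zero_mul]
  · have := (hip.nrm_pos hw).ne'
    field_simp
    ring

lemma dReal_eq (hip : IsContinuousInner ip) (h : HasGradAt ip f x g) (w : E) :
    dReal f x w = ip g w := by
  have hlim := (continuous_coe_real_ereal.tendsto _).comp (h.tendsto_diffQuot hip w)
  simp only [Function.comp_def, EReal.coe_mul, EReal.coe_sub] at hlim
  rw [dReal, subderiv, hlim.liminf_eq, EReal.toReal_coe]

lemma sdq2R_eq (hip : IsContinuousInner ip) (h : HasGradAt ip f x g) (p : ℝ × E) :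
    sdq2R f x p.1 p.2 = gradQuot2 ip f x g p := by
  rw [sdq2R, h.dReal_eq hip, gradQuot2]

lemma twiceSemiDiffAt_iff (hip : IsContinuousInner ip) (h : HasGradAt ip f x g) :
    TwiceSemiDiffAt f x ↔ ∀ w, ∃ d : ℝ, Tendsto (gradQuot2 ip f x g) (dirFilter w) (𝓝 d) := by
  simp only [TwiceSemiDiffAt, h.sdq2R_eq hip]
  exact and_iff_right fun w => ⟨_, h.tendsto_diffQuot hip w⟩

lemma secondSemiDeriv_eq_of_tendsto (hip : IsContinuousInner ip) (h : HasGradAt ip f x g)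
    {w : E} {d : ℝ} (hd : Tendsto (gradQuot2 ip f x g) (dirFilter w) (𝓝 d)) :
    secondSemiDeriv f x w = d := by
  simp only [secondSemiDeriv, h.sdq2R_eq hip]
  exact ((continuous_coe_real_ereal.tendsto d).comp hd).liminf_eq

lemma secondSemiDeriv_eq_subderiv2 (hip : IsContinuousInner ip) (h : HasGradAt ip f x g) (w : E) :
    secondSemiDeriv f x w = subderiv2 ip (fun y => (f y : EReal)) x g w := by
  simp only [secondSemiDeriv, subderiv2, h.sdq2R_eq hip, gradQuot2, sdq2, EReal.coe_mul,
    EReal.coe_sub]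

end HasGradAt

variable {n : ℕ}

lemma isContinuousInner_ipV : IsContinuousInner (ipV (n := n)) where
  smul_left := smul_dotProduct
  smul_right v t w := dotProduct_smul t v w
  pos_of_ne_zero {w} hw := by
    have hpos : 0 < w ⬝ᵥ w := by simpa only [star_trivial] using dotProduct_star_self_pos_iff.2 hw
    exact hpos
  continuous := by unfold ipV; fun_prop

lemma ipM_self (A : Sym n) : ipM A A = ∑ i, ∑ j, A.val i j ^ 2 := by
  have hA : A.val.IsSymm := A.2
  simp only [ipM, trace, diag_apply, mul_apply, hA.apply, sq]

lemma isContinuousInner_ipM : IsContinuousInner (ipM (n := n)) where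
  smul_left t A B := by
    simp only [ipM, Submodule.coe_smul, Matrix.smul_mul, trace_smul, smul_eq_mul]
  smul_right A t B := by
    simp only [ipM, Submodule.coe_smul, Matrix.mul_smul, trace_smul, smul_eq_mul]
  pos_of_ne_zero {A} hA := by
    obtain ⟨i, j, hij⟩ : ∃ i j, A.val i j ≠ 0 := by
      by_contra! h
      exact hA (Subtype.ext (Matrix.ext h))
    rw [ipM_self]
    refine Finset.sum_pos' (fun i _ => Finset.sum_nonneg fun j _ => sq_nonneg _)
      ⟨i, Finset.mem_univ i, ?_⟩
    exact Finset.sum_pos' (fun j _ => sq_nonneg _) ⟨j, Finset.mem_univ j, by positivity⟩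
  continuous := by unfold ipM; fun_prop

lemma SymmetricFn.grad_apply_eq {θ : (Fin n → ℝ) → ℝ} {x y : Fin n → ℝ} (hθ : SymmetricFn θ)
    (h : HasGradAt ipV θ x y) {i j : Fin n} (hij : x i = x j) : y i = y j := by
  have hline (k : Fin n) : Tendsto (fun t : ℝ => t⁻¹ * (θ (x + t • Pi.single k 1) - θ x))
      (𝓝[>] 0) (𝓝 (y k)) := by
    have hlim := (h.tendsto_diffQuot isContinuousInner_ipV (Pi.single k 1)).comp
      (tendsto_id.prodMk tendsto_const_nhds)
    have hy : ipV y (Pi.single k 1) = y k := dotProduct_single_one y k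
    rwa [hy] at hlim
  have hswap (t : ℝ) : θ (x + t • Pi.single i 1) = θ (x + t • Pi.single j 1) := by
    rw [← hθ (x + t • Pi.single j 1) (Equiv.swap i j)]
    congr 1
    ext k
    have hx : x (Equiv.swap i j k) = x k := by
      rw [Equiv.swap_apply_def]; split_ifs with hi hj <;> simp only [*]
    have hs : (Pi.single j 1 : Fin n → ℝ) (Equiv.swap i j k) = (Pi.single i 1 : Fin n → ℝ) k := by
      simp only [Pi.single_apply, Equiv.swap_apply_eq_iff, Equiv.swap_apply_right]
    simp only [Pi.add_apply, Pi.smul_apply, hx, hs]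
  exact tendsto_nhds_unique (hline i) ((hline j).congr fun t => by rw [hswap])

end DifferenceQuotient

/-! ## Second-order expansion of spectral functions -/

section SpectralExpansion

open Asymptotics

variable {n : ℕ}

lemma nrm_ipV_eq_norm_toLp (v : Fin n → ℝ) : nrm ipV v = ‖WithLp.toLp 2 v‖ := by
  simp only [nrm, ipV, EuclideanSpace.norm_eq, Real.norm_eq_abs, sq_abs, ← sq]

lemma LocLipAt.isBigO_sub {α : Type*} {F : Filter α} {f : (Fin n → ℝ) → ℝ} {x : Fin n → ℝ}
    {u v : α → Fin n → ℝ} (hf : LocLipAt ipV f x) (hu : Tendsto u F (𝓝 x))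
    (hv : Tendsto v F (𝓝 x)) : (fun p => f (u p) - f (v p)) =O[F] fun p => u p - v p := by
  obtain ⟨V, hV, ℓ, -, hℓ⟩ := hf
  refine IsBigO.trans (g := fun p => WithLp.toLp 2 (u p - v p)) ?_ ?_
  · refine IsBigO.of_bound ℓ ?_
    filter_upwards [hu hV, hv hV] with p hup hvp
    exact nrm_ipV_eq_norm_toLp (u p - v p) ▸ hℓ _ hup _ hvp
  · exact ((PiLp.continuousLinearEquiv 2 ℝ fun _ : Fin n => ℝ).symm :
      (Fin n → ℝ) →L[ℝ] EuclideanSpace ℝ (Fin n)).isBigO_comp _ _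

open scoped Matrix.Norms.L2Operator in
lemma isBigO_eigval_blockModel_sub {α : Type*} [TopologicalSpace α] (l : Fin n → ℝ) {t : α → ℝ}
    {H : α → Matrix (Fin n) (Fin n) ℝ} (ht : Continuous t) (hH : Continuous H)
    (hsymm : ∀ p, (H p).IsSymm) (a : α) :
    (fun p => eigval (diagonal l + t p • blockModel l (t p) (H p)) -
      eigval (diagonal l + t p • H p)) =O[𝓝 a] fun p => t p ^ 3 := by
  have hsymmB (p : α) : (diagonal l + t p • H p).IsSymm :=
    (isSymm_diagonal l).add ((hsymm p).smul _)
  have hK : Continuous fun p => sylvesterSol l (H p) := continuous_sylvesterSol.comp hH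
  have hL : Continuous fun p => sylvesterSol l (secondOrderTerm l (H p)) :=
    continuous_sylvesterSol.comp (continuous_secondOrderTerm.comp hH)
  have hcube {R : α → Matrix (Fin n) (Fin n) ℝ} (hR : Continuous R) :
      (fun p => t p ^ 3 • R p) =O[𝓝 a] fun p => t p ^ 3 := by
    simpa only [smul_eq_mul, mul_one] using
      (isBigO_refl (fun p => t p ^ 3) (𝓝 a)).smul (hR.continuousAt.tendsto.isBigO_one ℝ)
  refine isBigO_eigval_sub (S := fun p => blockRotation l (t p) (H p))
    (fun p => (isSymm_diagonal l).add ((isSymm_blockModel (hsymm p) _).smul _)) hsymmB ?_ ?_ ?_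
  · simp only [blockRotation_conj (hsymm _), add_sub_cancel_left]
    exact hcube (continuous_conjRemainder continuous_const hH hK hL ht)
  · simp only [blockRotation_transpose_mul_self (hsymm _), add_sub_cancel_left]
    exact hcube (continuous_conjRemainder continuous_const continuous_const hK hL ht)
  · have hB : Continuous fun p => diagonal l + t p • H p := by fun_prop
    exact (continuousOn_eigval.comp_continuous hB hsymmB).continuousAt.tendsto.isBigO_one ℝ

lemma isSymm_transpose_mul_mul (U : Matrix (Fin n) (Fin n) ℝ) {H : Matrix (Fin n) (Fin n) ℝ}
    (hH : H.IsSymm) : (Uᵀ * H * U).IsSymm := by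
  simp only [Matrix.IsSymm, transpose_mul, transpose_transpose, hH.eq, Matrix.mul_assoc]

lemma OrthDiag.eigval_diagonal_add_smul {X U H : Matrix (Fin n) (Fin n) ℝ}
    (hX : OrthDiag X U (eigval X)) (hH : H.IsSymm) (t : ℝ) :
    eigval (diagonal (eigval X) + t • (Uᵀ * H * U)) = eigval (X + t • H) := by
  have hsymm : (diagonal (eigval X) + t • (Uᵀ * H * U)).IsSymm :=
    (isSymm_diagonal _).add ((isSymm_transpose_mul_mul U hH).smul t)
  rw [← eigval_conj hsymm hX.orth]
  congr 1
  calc U * (diagonal (eigval X) + t • (Uᵀ * H * U)) * Uᵀ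
      = U * diagonal (eigval X) * Uᵀ + t • ((U * Uᵀ) * H * (U * Uᵀ)) := by
        simp only [Matrix.mul_add, Matrix.add_mul, Matrix.mul_smul, Matrix.smul_mul,
          Matrix.mul_assoc]
    _ = X + t • H := by rw [hX.orth, Matrix.one_mul, Matrix.mul_one, ← hX.eq]

/-- The direction `w` for which, up to `O(t³)` and a permutation, `λ(X + t • H)` equals
`λ(X) + t • w`. -/
def modelDir (X U : Matrix (Fin n) (Fin n) ℝ) (p : ℝ × Sym n) : Fin n → ℝ :=
  blockEigval X (blockModel (eigval X) p.1 (Uᵀ * p.2.val * U))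

lemma blockEigval_blockPart (X M : Matrix (Fin n) (Fin n) ℝ) :
    blockEigval X (blockPart (eigval X) M) = blockEigval X M := by
  have hmem (i : Fin n) (a) : eigval X (blockEmb X i a) = eigval X i :=
    mem_blockSet.1 ((blockSet X i).orderIsoOfFin rfl a).2
  have hmat (i : Fin n) : blockMat X (blockPart (eigval X) M) i = blockMat X M i := by
    ext a b
    simp only [blockMat, blockPart, of_apply, hmem, if_true]
  ext i
  simp only [blockEigval, hmat]

lemma tendsto_modelDir (X U : Matrix (Fin n) (Fin n) ℝ) (H : Sym n) :
    Tendsto (modelDir X U) (dirFilter H) (𝓝 (lambdaDir X U H.val)) := by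
  have hmodel : Continuous fun p : ℝ × Sym n =>
      blockModel (eigval X) p.1 (Uᵀ * p.2.val * U) :=
    continuous_blockModel.comp (f := fun p : ℝ × Sym n => (p.1, Uᵀ * p.2.val * U)) (by fun_prop)
  have hcont : Continuous (modelDir X U) :=
    continuous_blockEigval hmodel fun p =>
      isSymm_blockModel (isSymm_transpose_mul_mul U p.2.2) p.1
  have hzero : modelDir X U (0, H) = lambdaDir X U H.val := by
    simp only [modelDir, blockModel, zero_smul, add_zero, blockEigval_blockPart]
    rfl
  exact hzero ▸ (hcont.tendsto (0, H)).mono_left (dirFilter_le_nhds H)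

variable {θ : (Fin n → ℝ) → ℝ} {X Y : Sym n} {U : Matrix (Fin n) (Fin n) ℝ} {y : Fin n → ℝ}

lemma SymmetricFn.isBigO_spectral_sub_modelDir (hθ : SymmetricFn θ)
    (hLip : LocLipAt ipV θ (eigval X.val)) (hX : OrthDiag X.val U (eigval X.val)) (H : Sym n) :
    (fun p : ℝ × Sym n => θ (eigval (X + p.1 • p.2).val) -
      θ (eigval X.val + p.1 • modelDir X.val U p)) =O[𝓝 (0, H)] fun p => p.1 ^ 3 := by
  set l := eigval X.val
  have hsymm (p : ℝ × Sym n) : (Uᵀ * p.2.val * U).IsSymm := isSymm_transpose_mul_mul U p.2.2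
  have hdiff := (isBigO_eigval_blockModel_sub l (t := fun p : ℝ × Sym n => p.1)
    (H := fun p => Uᵀ * p.2.val * U) continuous_fst (by fun_prop) hsymm (0, H)).neg_left
  have heig (p : ℝ × Sym n) : eigval (diagonal l + p.1 • (Uᵀ * p.2.val * U)) =
      eigval (X + p.1 • p.2).val := hX.eigval_diagonal_add_smul p.2.2 p.1
  simp only [heig, neg_sub] at hdiff
  have hpert : Tendsto (fun p : ℝ × Sym n => eigval (X + p.1 • p.2).val) (𝓝 (0, H)) (𝓝 l) := by
    have hcont : Continuous fun p : ℝ × Sym n => eigval (X + p.1 • p.2).val :=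
      continuousOn_eigval.comp_continuous (by fun_prop) fun p => (X + p.1 • p.2).2
    simpa only [zero_smul, add_zero] using hcont.tendsto (0, H)
  have hcube : Tendsto (fun p : ℝ × Sym n => p.1 ^ 3) (𝓝 (0, H)) (𝓝 0) := by
    have hcont : Continuous fun p : ℝ × Sym n => p.1 ^ 3 := by fun_prop
    simpa only [zero_pow three_ne_zero] using hcont.tendsto (0, H)
  have hmodel : Tendsto (fun p : ℝ × Sym n =>
      eigval (diagonal l + p.1 • blockModel l p.1 (Uᵀ * p.2.val * U))) (𝓝 (0, H)) (𝓝 l) := by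
    simpa only [sub_sub_cancel, sub_zero] using hpert.sub (hdiff.trans_tendsto hcube)
  refine ((hLip.isBigO_sub hpert hmodel).trans hdiff).congr_left fun p => ?_
  rw [hθ.apply_eigval_diagonal_add_smul (isSymm_blockModel (hsymm p) p.1)
    fun i j => blockModel_apply_of_ne, modelDir]

lemma SymmetricFn.tendsto_spectral_sub_modelDir (hθ : SymmetricFn θ)
    (hLip : LocLipAt ipV θ (eigval X.val)) (hX : OrthDiag X.val U (eigval X.val)) (H : Sym n) :
    Tendsto (fun p : ℝ × Sym n => 2 / p.1 ^ 2 * (θ (eigval (X + p.1 • p.2).val) -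
      θ (eigval X.val + p.1 • modelDir X.val U p))) (dirFilter H) (𝓝 0) := by
  have hlin : Tendsto (fun p : ℝ × Sym n => 2 * p.1) (dirFilter H) (𝓝 0) := by
    have hcont : Continuous fun p : ℝ × Sym n => 2 * p.1 := by fun_prop
    simpa only [mul_zero] using (hcont.tendsto (0, H)).mono_left (dirFilter_le_nhds H)
  have hcube := (hθ.isBigO_spectral_sub_modelDir hLip hX H).mono (dirFilter_le_nhds H)
  refine (((isBigO_refl _ _).mul hcube).congr' .rfl ?_).trans_tendsto hlin
  filter_upwards [eventually_dirFilter_pos H] with p hp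
  field_simp

lemma ipM_eq_sum_of_eq_conj_diagonal (hY : Y.val = U * diagonal y * Uᵀ) (H : Sym n) :
    ipM Y H = ∑ i, y i * (Uᵀ * H.val * U) i i := by
  calc ipM Y H = (diagonal y * (Uᵀ * H.val * U)).trace := by
        rw [ipM, hY, Matrix.mul_assoc, Matrix.mul_assoc, trace_mul_comm]
        simp only [Matrix.mul_assoc]
    _ = ∑ i, y i * (Uᵀ * H.val * U) i i := by
        simp only [trace, diag_apply, diagonal_mul]

lemma ipV_modelDir (hX : OrthDiag X.val U (eigval X.val)) (hY : Y.val = U * diagonal y * Uᵀ)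
    (hy : ∀ i j, eigval X.val i = eigval X.val j → y i = y j) (p : ℝ × Sym n) :
    ipV y (modelDir X.val U p) = ipM Y p.2 + p.1 / 2 * curvTerm X.val U p.2.val y := by
  rw [modelDir, ipV_blockEigval hy
    (isSymm_blockModel (isSymm_transpose_mul_mul U p.2.2) p.1) fun i j => blockModel_apply_of_ne]
  simp only [blockModel_apply_self, mul_add, Finset.sum_add_distrib]
  rw [ipM_eq_sum_of_eq_conj_diagonal hY, hX.curvTerm_eq, ← mul_assoc,
    div_mul_cancel₀ _ (two_ne_zero' ℝ), Finset.mul_sum]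
  congr! 2
  ring

lemma gradQuot2_spectral_eq (hX : OrthDiag X.val U (eigval X.val))
    (hY : Y.val = U * diagonal y * Uᵀ) (hy : ∀ i j, eigval X.val i = eigval X.val j → y i = y j)
    {p : ℝ × Sym n} (hp : p.1 ≠ 0) :
    gradQuot2 ipM (fun A : Sym n => θ (eigval A.val)) X Y p =
      gradQuot2 ipV θ (eigval X.val) y (p.1, modelDir X.val U p) + curvTerm X.val U p.2.val y +
        2 / p.1 ^ 2 * (θ (eigval (X + p.1 • p.2).val) -
          θ (eigval X.val + p.1 • modelDir X.val U p)) := by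
  simp only [gradQuot2, ipV_modelDir hX hY hy]
  field_simp
  ring

lemma tendsto_gradQuot2_spectral (hθ : SymmetricFn θ) (hLip : LocLipAt ipV θ (eigval X.val))
    (hgrad : HasGradAt ipV θ (eigval X.val) y) (hX : OrthDiag X.val U (eigval X.val))
    (hY : Y.val = U * diagonal y * Uᵀ) {H : Sym n} {d : ℝ}
    (hd : Tendsto (gradQuot2 ipV θ (eigval X.val) y) (dirFilter (lambdaDir X.val U H.val))
      (𝓝 d)) :
    Tendsto (gradQuot2 ipM (fun A : Sym n => θ (eigval A.val)) X Y) (dirFilter H)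
      (𝓝 (d + curvTerm X.val U H.val y)) := by
  have hdir : Tendsto (fun p : ℝ × Sym n => (p.1, modelDir X.val U p)) (dirFilter H)
      (dirFilter (lambdaDir X.val U H.val)) :=
    tendsto_fst.prodMk (tendsto_modelDir X.val U H)
  have hcurv : Tendsto (fun p : ℝ × Sym n => curvTerm X.val U p.2.val y) (dirFilter H)
      (𝓝 (curvTerm X.val U H.val y)) := by
    have hcont : Continuous fun A : Sym n => curvTerm X.val U A.val y := by
      unfold curvTerm; fun_prop
    exact (hcont.tendsto H).comp tendsto_snd
  have hlim := ((hd.comp hdir).add hcurv).add (hθ.tendsto_spectral_sub_modelDir hLip hX H)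
  rw [add_zero] at hlim
  refine hlim.congr' ?_
  filter_upwards [eventually_dirFilter_pos H] with p hp
  exact (gradQuot2_spectral_eq hX hY (fun _ _ => hθ.grad_apply_eq hgrad) hp.ne').symm

/-- The symmetric matrix `U Diag(w) Uᵀ`; along such directions a spectral function restricts to
the underlying symmetric function. -/
def conjDiagSym (U : Matrix (Fin n) (Fin n) ℝ) (w : Fin n → ℝ) : Sym n :=
  ⟨U * diagonal w * Uᵀ, isSymm_transpose_mul_mul Uᵀ (isSymm_diagonal w)⟩

lemma continuous_conjDiagSym (U : Matrix (Fin n) (Fin n) ℝ) : Continuous (conjDiagSym U) :=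
  Continuous.subtype_mk (by fun_prop) _

lemma gradQuot2_conjDiagSym (hθ : SymmetricFn θ) (hX : OrthDiag X.val U (eigval X.val))
    (hY : Y.val = U * diagonal y * Uᵀ) (t : ℝ) (w : Fin n → ℝ) :
    gradQuot2 ipM (fun A : Sym n => θ (eigval A.val)) X Y (t, conjDiagSym U w) =
      gradQuot2 ipV θ (eigval X.val) y (t, w) := by
  have hW : OrthDiag (conjDiagSym U w).val U w := ⟨hX.orth, rfl⟩
  have hvalue : θ (eigval (X + t • conjDiagSym U w).val) = θ (eigval X.val + t • w) :=
    (hX.add_smul hW t).symmetricFn_eigval hθ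
  have hinner : ipM Y (conjDiagSym U w) = ipV y w :=
    (OrthDiag.mul ⟨hX.orth, hY⟩ hW).trace_eq_sum
  simp only [gradQuot2, hvalue, hinner]

lemma tendsto_gradQuot2_of_spectral (hθ : SymmetricFn θ)
    (hX : OrthDiag X.val U (eigval X.val)) (hY : Y.val = U * diagonal y * Uᵀ) {w : Fin n → ℝ}
    {d : ℝ} (hd : Tendsto (gradQuot2 ipM (fun A : Sym n => θ (eigval A.val)) X Y)
      (dirFilter (conjDiagSym U w)) (𝓝 d)) :
    Tendsto (gradQuot2 ipV θ (eigval X.val) y) (dirFilter w) (𝓝 d) := by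
  have hdir : Tendsto (fun p : ℝ × (Fin n → ℝ) => (p.1, conjDiagSym U p.2)) (dirFilter w)
      (dirFilter (conjDiagSym U w)) :=
    tendsto_fst.prodMk (((continuous_conjDiagSym U).tendsto w).comp tendsto_snd)
  exact (hd.comp hdir).congr fun p => gradQuot2_conjDiagSym hθ hX hY p.1 p.2

end SpectralExpansion

/-- Theorem 4.3: twice semidifferentiability of a differentiable spectral
function is equivalent to that of its symmetric part, with a formula for the second
semiderivative. -/
theorem twice_semidiff_spectral {n : ℕ} (θ : (Fin n → ℝ) → ℝ)
    (X Y : Sym n) (U : Matrix (Fin n) (Fin n) ℝ) (y : Fin n → ℝ)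
    (hsym : SymmetricFn θ)
    (hLip : LocLipAt ipV θ (eigval X.val))
    (hgradθ : HasGradAt ipV θ (eigval X.val) y)
    (hU : U ∈ eigOrth X.val)
    (hYdec : Y.val = U * Matrix.diagonal y * Uᵀ)
    (hgradg : HasGradAt ipM (fun A : Sym n => θ (eigval A.val)) X Y) :
    (TwiceSemiDiffAt (fun A : Sym n => θ (eigval A.val)) X ↔
      TwiceSemiDiffAt θ (eigval X.val)) ∧
    (TwiceSemiDiffAt (fun A : Sym n => θ (eigval A.val)) X →
      ∀ H : Sym n,
        secondSemiDeriv (fun A : Sym n => θ (eigval A.val)) X H =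
          secondSemiDeriv θ (eigval X.val) (lambdaDir X.val U H.val)
            + ((curvTerm X.val U H.val y : ℝ) : EReal) ∧
        secondSemiDeriv (fun A : Sym n => θ (eigval A.val)) X H =
          subderiv2 ipM (fun A : Sym n => ((θ (eigval A.val) : ℝ) : EReal)) X Y H) := by
  have hX : OrthDiag X.val U (eigval X.val) := ⟨hU.1, hU.2⟩
  have hforward {H : Sym n} {d : ℝ} :=
    tendsto_gradQuot2_spectral (H := H) (d := d) hsym hLip hgradθ hX hYdec
  have hiff : TwiceSemiDiffAt (fun A : Sym n => θ (eigval A.val)) X ↔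
      TwiceSemiDiffAt θ (eigval X.val) := by
    rw [hgradg.twiceSemiDiffAt_iff isContinuousInner_ipM,
      hgradθ.twiceSemiDiffAt_iff isContinuousInner_ipV]
    exact ⟨fun h w => (h (conjDiagSym U w)).imp fun _ =>
        tendsto_gradQuot2_of_spectral hsym hX hYdec,
      fun h H => (h (lambdaDir X.val U H.val)).elim fun _ hd => ⟨_, hforward hd⟩⟩
  refine ⟨hiff, fun h H => ⟨?_, hgradg.secondSemiDeriv_eq_subderiv2 isContinuousInner_ipM H⟩⟩
  obtain ⟨d, hd⟩ := (hgradθ.twiceSemiDiffAt_iff isContinuousInner_ipV).1 (hiff.1 h)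
    (lambdaDir X.val U H.val)
  rw [hgradg.secondSemiDeriv_eq_of_tendsto isContinuousInner_ipM (hforward hd),
    hgradθ.secondSemiDeriv_eq_of_tendsto isContinuousInner_ipV hd, EReal.coe_add]

end SpecPaper
end
end
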